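/- arXiv:1210.1342 — 4 statements merged into one kernel-verified Lean document; each statement's English description precedes it below -/
import Mathlib

section
/- Let α, β ≥ -1/2. There exists a constant C depending only on α and β such that for all θ, φ ∈ (0,π) with θ ≠ φ one has ∬_{[-1,1]²} dΠ_α(u) dΠ_β(v) / q(θ,φ,u,v)^{α+β+3/2} ≤ C / μ_{α,β}^+(B(θ, |θ-φ|)). -/
open MeasureTheory Real Set

noncomputable section

/-- The Jacobi measure `μ_{α,β}^+` on `(0,π)`: density
`(sin(θ/2))^(2α+1) (cos(θ/2))^(2β+1)` w.r.t. Lebesgue measure on `(0,π)`. -/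
def jacobiMeasure (α β : ℝ) : Measure ℝ :=
  (volume.restrict (Ioo 0 π)).withDensity
    (fun θ => ENNReal.ofReal (Real.sin (θ / 2) ^ (2 * α + 1) * Real.cos (θ / 2) ^ (2 * β + 1)))

/-- The ball `B(θ,r) = (θ-r, θ+r) ∩ (0,π)`. -/
def jacobiBall (θ r : ℝ) : Set ℝ := Ioo (θ - r) (θ + r) ∩ Ioo 0 π

/-- The measure `Π_α` on `[-1,1]`. -/
def PiMeasure (α : ℝ) : Measure ℝ :=
  if α = -(1 / 2) then (2 : ENNReal)⁻¹ • (Measure.dirac (-1) + Measure.dirac 1)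
  else
    (volume.restrict (Icc (-1) 1)).withDensity
      (fun u => ENNReal.ofReal
        (Real.Gamma (α + 1) / (Real.sqrt π * Real.Gamma (α + 1 / 2)) * (1 - u ^ 2) ^ (α - 1 / 2)))

/-- `q(θ,φ,u,v) = 1 - u sin(θ/2) sin(φ/2) - v cos(θ/2) cos(φ/2)`. -/
def qfun (θ φ u v : ℝ) : ℝ :=
  1 - u * Real.sin (θ / 2) * Real.sin (φ / 2) - v * Real.cos (θ / 2) * Real.cos (φ / 2)

/-- `Ψ^{α,β}(t,s) = sinh(t/2) / (cosh(t/2) - 1 + s)^(α+β+2)`. -/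
def Psi (α β t s : ℝ) : ℝ :=
  Real.sinh (t / 2) / (Real.cosh (t / 2) - 1 + s) ^ (α + β + 2)

/-- The Jacobi-Poisson kernel `H_t^{α,β}(θ,φ)`. -/
def Hker (α β t θ φ : ℝ) : ℝ :=
  ((2 : ℝ) ^ (-(α + β + 2)) / (jacobiMeasure α β (Ioo 0 π)).toReal) * Real.sinh (t / 2) *
    ∫ u, ∫ v, 1 / (Real.cosh (t / 2) - 1 + qfun θ φ u v) ^ (α + β + 2)
      ∂(PiMeasure β) ∂(PiMeasure α)

/-- The symmetrized kernel `H̃_t^{α,β}(θ,φ) = (1/4) sin θ sin φ H_t^{α+1,β+1}(θ,φ)`. -/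
def Htilde (α β t θ φ : ℝ) : ℝ :=
  (1 / 4) * Real.sin θ * Real.sin φ * Hker (α + 1) (β + 1) t θ φ

end


/-- Power integral near zero. -/
lemma aux_lint_zero (A c : ℝ) (hA : 0 < A) (hc : 0 < c) :
    ∫⁻ w in Ioc 0 c, ENNReal.ofReal (w ^ (A - 1)) = ENNReal.ofReal (c ^ A / A) := by
  have hi : IntervalIntegrable (fun w : ℝ => w ^ (A - 1)) volume 0 c :=
    intervalIntegral.intervalIntegrable_rpow' (by linarith)
  rw [intervalIntegrable_iff_integrableOn_Ioc_of_le hc.le] at hi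
  rw [← ofReal_integral_eq_lintegral_ofReal hi]
  · rw [← intervalIntegral.integral_of_le hc.le, integral_rpow (Or.inl (by linarith))]
    simp [Real.zero_rpow hA.ne']
  · filter_upwards [ae_restrict_mem measurableSet_Ioc] with w hw
    exact Real.rpow_nonneg hw.1.le _

/-- Power integral near infinity. -/
lemma aux_lint_inf (γ c : ℝ) (hγ : 0 < γ) (hc : 0 < c) :
    ∫⁻ w in Ioi c, ENNReal.ofReal (w ^ (-γ - 1)) = ENNReal.ofReal (c ^ (-γ) / γ) := by
  have hi := integrableOn_Ioi_rpow_of_lt (a := -γ - 1) (by linarith) hc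
  rw [← ofReal_integral_eq_lintegral_ofReal hi]
  · rw [integral_Ioi_rpow_of_lt (by linarith) hc]
    congr 1
    rw [sub_add_cancel]
    field_simp
  · filter_upwards [ae_restrict_mem measurableSet_Ioi] with w hw
    exact Real.rpow_nonneg (hc.trans hw).le _

/-- The basic one-dimensional estimate. -/
lemma aux_w (A γ D a : ℝ) (hA : 0 < A) (hγ : 0 < γ) (hD : 0 < D) (ha : 0 ≤ a) :
    ∫⁻ w in Ioc 0 1, ENNReal.ofReal (w ^ (A - 1) * (D + w * a) ^ (-(A + γ)))
      ≤ ENNReal.ofReal ((1 / A + 1 / γ) * ((D + a) ^ (-A) * D ^ (-γ))) := by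
  set S := D + a with hS
  have hSp : 0 < S := by positivity
  set c := D / S with hc
  have hcp : 0 < c := by positivity
  have hc1 : c ≤ 1 := by rw [hc, div_le_one hSp]; linarith
  have hsub : Ioc (0:ℝ) 1 ⊆ Ioc 0 c ∪ Ioc c 1 := by
    intro w hw
    by_cases h : w ≤ c
    · exact Or.inl ⟨hw.1, h⟩
    · exact Or.inr ⟨not_le.mp h, hw.2⟩
  have e1 : ∫⁻ w in Ioc 0 c, ENNReal.ofReal (w ^ (A - 1) * (D + w * a) ^ (-(A + γ)))
      ≤ ENNReal.ofReal (1 / A * (S ^ (-A) * D ^ (-γ))) := by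
    calc _ ≤ ∫⁻ w in Ioc 0 c, ENNReal.ofReal (D ^ (-(A + γ))) * ENNReal.ofReal (w ^ (A - 1)) := by
            refine setLIntegral_mono' measurableSet_Ioc fun w hw => ?_
            rw [← ENNReal.ofReal_mul (by positivity), mul_comm]
            have : 0 ≤ w ^ (A - 1) := Real.rpow_nonneg hw.1.le _
            refine ENNReal.ofReal_le_ofReal (mul_le_mul_of_nonneg_right ?_ this)
            exact Real.rpow_le_rpow_of_nonpos hD
              (by linarith [mul_nonneg hw.1.le ha]) (by linarith)
      _ = _ := by
            rw [lintegral_const_mul' _ _ ENNReal.ofReal_ne_top, aux_lint_zero A c hA hcp,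
              ← ENNReal.ofReal_mul (by positivity)]
            congr 1
            rw [hc, Real.div_rpow hD.le hSp.le, Real.rpow_neg hSp.le, neg_add,
              Real.rpow_add hD, Real.rpow_neg hD.le A]
            have := (Real.rpow_pos_of_pos hD A).ne'
            have := (Real.rpow_pos_of_pos hSp A).ne'
            field_simp
  have e2 : ∫⁻ w in Ioc c 1, ENNReal.ofReal (w ^ (A - 1) * (D + w * a) ^ (-(A + γ)))
      ≤ ENNReal.ofReal (1 / γ * (S ^ (-A) * D ^ (-γ))) := by
    calc _ ≤ ∫⁻ w in Ioc c 1,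
              ENNReal.ofReal (S ^ (-(A + γ))) * ENNReal.ofReal (w ^ (-γ - 1)) := by
            refine setLIntegral_mono' measurableSet_Ioc fun w hw => ?_
            have hw0 : 0 < w := hcp.trans hw.1
            rw [← ENNReal.ofReal_mul (by positivity)]
            refine ENNReal.ofReal_le_ofReal ?_
            have h1 : (D + w * a) ^ (-(A + γ)) ≤ (w * S) ^ (-(A + γ)) := by
              refine Real.rpow_le_rpow_of_nonpos (by positivity) ?_ (by linarith)
              rw [hS]; nlinarith [hw.2]
            calc _ ≤ w ^ (A - 1) * (w * S) ^ (-(A + γ)) := by gcongr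
              _ = _ := by
                rw [Real.mul_rpow hw0.le hSp.le, ← mul_assoc, ← Real.rpow_add hw0, mul_comm]
                congr 2; ring
      _ ≤ ∫⁻ w in Ioi c,
              ENNReal.ofReal (S ^ (-(A + γ))) * ENNReal.ofReal (w ^ (-γ - 1)) :=
            lintegral_mono_set Ioc_subset_Ioi_self
      _ = _ := by
            rw [lintegral_const_mul' _ _ ENNReal.ofReal_ne_top, aux_lint_inf γ c hγ hcp,
              ← ENNReal.ofReal_mul (by positivity)]
            congr 1
            rw [hc, Real.div_rpow hD.le hSp.le, neg_add, Real.rpow_add hSp]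
            have := (Real.rpow_pos_of_pos hSp (-γ)).ne'
            field_simp
  calc _ ≤ _ := lintegral_mono_set hsub
    _ ≤ _ := lintegral_union_le _ _ _
    _ ≤ _ := add_le_add e1 e2
    _ = _ := by
      rw [← ENNReal.ofReal_add (by positivity) (by positivity)]
      congr 1; ring

/-- Elementary bound for powers on `[1,2]`. -/
lemma aux_pow_two (A x : ℝ) (hA : 0 < A) (h1 : 1 ≤ x) (h2 : x ≤ 2) : x ^ (A - 1) ≤ 2 ^ A := by
  calc x ^ (A - 1) ≤ x ^ A := Real.rpow_le_rpow_of_exponent_le h1 (by linarith)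
    _ ≤ 2 ^ A := Real.rpow_le_rpow (by linarith) h2 hA.le

/-- Integral against the weight `(1-u^2)^(A-1)`. -/
lemma aux_u (A γ : ℝ) (hA : 0 < A) (hγ : 0 < γ) (D a : ℝ) (hD : 0 < D) (ha : 0 ≤ a) :
    ∫⁻ u in Icc (-1) 1, ENNReal.ofReal ((1 - u ^ 2) ^ (A - 1) * (D + (1 - u) * a) ^ (-(A + γ)))
      ≤ ENNReal.ofReal (2 ^ A * (2 / A + 1 / γ) * ((D + a) ^ (-A) * D ^ (-γ))) := by
  set T := (D + a) ^ (-A) * D ^ (-γ) with hT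
  have hTp : 0 < T := by positivity
  have hsub : Ioo (-1:ℝ) 1 ⊆ Ico 0 1 ∪ Ioc (-1) 0 := by
    intro u hu
    by_cases h : 0 ≤ u
    · exact Or.inl ⟨h, hu.2⟩
    · exact Or.inr ⟨hu.1, (not_le.mp h).le⟩
  have e1 : ∫⁻ u in Ico 0 1,
      ENNReal.ofReal ((1 - u ^ 2) ^ (A - 1) * (D + (1 - u) * a) ^ (-(A + γ)))
      ≤ ENNReal.ofReal (2 ^ A * (1 / A + 1 / γ) * T) := by
    calc _ ≤ ∫⁻ u in Ico (0:ℝ) 1, ENNReal.ofReal (2 ^ A) *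
              ENNReal.ofReal ((1 - u) ^ (A - 1) * (D + (1 - u) * a) ^ (-(A + γ))) := by
            refine setLIntegral_mono' measurableSet_Ico fun u hu => ?_
            have hu1 : 0 < 1 - u := by linarith [hu.2]
            rw [← ENNReal.ofReal_mul (by positivity)]
            refine ENNReal.ofReal_le_ofReal ?_
            rw [show 1 - u ^ 2 = (1 + u) * (1 - u) by ring,
              Real.mul_rpow (by linarith [hu.1]) hu1.le, mul_assoc]
            have := aux_pow_two A (1 + u) hA (by linarith [hu.1]) (by linarith [hu.2])
            gcongr
      _ = ENNReal.ofReal (2 ^ A) * ∫⁻ u in Ico (0:ℝ) 1,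
              ENNReal.ofReal ((1 - u) ^ (A - 1) * (D + (1 - u) * a) ^ (-(A + γ))) := by
            rw [lintegral_const_mul' _ _ ENNReal.ofReal_ne_top]
      _ = ENNReal.ofReal (2 ^ A) * ∫⁻ w in Ioc (0:ℝ) 1,
              ENNReal.ofReal (w ^ (A - 1) * (D + w * a) ^ (-(A + γ))) := by
            congr 1
            rw [← lintegral_indicator measurableSet_Ico, ← lintegral_indicator measurableSet_Ioc,
              ← lintegral_sub_left_eq_self ((Ioc (0:ℝ) 1).indicator _) (1:ℝ)]
            congr 1
            ext u
            simp only [indicator, mem_Ico, mem_Ioc]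
            refine if_congr ?_ rfl rfl
            constructor <;> rintro ⟨h1, h2⟩ <;> constructor <;> linarith
      _ ≤ _ := by
            rw [mul_assoc, ENNReal.ofReal_mul (by positivity)]
            gcongr
            exact aux_w A γ D a hA hγ hD ha
  have e2 : ∫⁻ u in Ioc (-1) 0,
      ENNReal.ofReal ((1 - u ^ 2) ^ (A - 1) * (D + (1 - u) * a) ^ (-(A + γ)))
      ≤ ENNReal.ofReal (2 ^ A * (1 / A) * T) := by
    calc _ ≤ ∫⁻ u in Ioc (-1:ℝ) 0, ENNReal.ofReal (2 ^ A * T) *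
              ENNReal.ofReal ((1 + u) ^ (A - 1)) := by
            refine setLIntegral_mono' measurableSet_Ioc fun u hu => ?_
            have hu1 : 0 < 1 + u := by linarith [hu.1]
            rw [← ENNReal.ofReal_mul (by positivity)]
            refine ENNReal.ofReal_le_ofReal ?_
            rw [show 1 - u ^ 2 = (1 + u) * (1 - u) by ring,
              Real.mul_rpow hu1.le (by linarith [hu.2])]
            have h1 := aux_pow_two A (1 - u) hA (by linarith [hu.2]) (by linarith [hu.1])
            have h2 : (D + (1 - u) * a) ^ (-(A + γ)) ≤ T := by
              calc _ ≤ (D + a) ^ (-(A + γ)) := by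
                    refine Real.rpow_le_rpow_of_nonpos (by positivity) ?_ (by linarith)
                    nlinarith [hu.2]
                _ = (D + a) ^ (-A) * (D + a) ^ (-γ) := by
                    rw [← Real.rpow_add (by positivity)]; congr 1; ring
                _ ≤ _ := by
                    rw [hT]
                    have := Real.rpow_le_rpow_of_nonpos hD (show D ≤ D + a by linarith)
                      (show -γ ≤ 0 by linarith)
                    gcongr
            have h3 : 0 ≤ (D + (1 - u) * a) ^ (-(A + γ)) := by
              have : 0 ≤ (1 - u) * a := mul_nonneg (by linarith [hu.2]) ha
              positivity
            calc _ ≤ (1 + u) ^ (A - 1) * 2 ^ A * T := by gcongr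
              _ = _ := by ring
      _ = ENNReal.ofReal (2 ^ A * T) * ∫⁻ u in Ioc (-1:ℝ) 0,
              ENNReal.ofReal ((1 + u) ^ (A - 1)) := by
            rw [lintegral_const_mul' _ _ ENNReal.ofReal_ne_top]
      _ = ENNReal.ofReal (2 ^ A * T) * ∫⁻ w in Ioc (0:ℝ) 1,
              ENNReal.ofReal (w ^ (A - 1)) := by
            congr 1
            rw [← lintegral_indicator measurableSet_Ioc, ← lintegral_indicator measurableSet_Ioc,
              ← lintegral_add_left_eq_self ((Ioc (0:ℝ) 1).indicator _) (1:ℝ)]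
            congr 1
            ext u
            simp only [indicator, mem_Ioc]
            refine if_congr ?_ rfl rfl
            constructor <;> rintro ⟨h1, h2⟩ <;> constructor <;> linarith
      _ = _ := by
            rw [aux_lint_zero A 1 hA one_pos, ← ENNReal.ofReal_mul (by positivity)]
            congr 1
            rw [Real.one_rpow]; ring
  rw [setLIntegral_congr Ioo_ae_eq_Icc.symm]
  calc _ ≤ _ := lintegral_mono_set hsub
    _ ≤ _ := lintegral_union_le _ _ _
    _ ≤ _ := add_le_add e1 e2
    _ = _ := by
      rw [← ENNReal.ofReal_add (by positivity) (by positivity)]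
      congr 1; ring

lemma aux_ae (α : ℝ) : ∀ᵐ u ∂(PiMeasure α), u ∈ Icc (-1 : ℝ) 1 := by
  unfold PiMeasure
  split_ifs
  · refine Measure.ae_smul_measure ?_ _
    rw [ae_add_measure_iff]
    constructor
    · exact (ae_dirac_iff (p := fun x : ℝ => x ∈ Icc (-1 : ℝ) 1) measurableSet_Icc).2 (by norm_num)
    · exact (ae_dirac_iff (p := fun x : ℝ => x ∈ Icc (-1 : ℝ) 1) measurableSet_Icc).2 (by norm_num)
  · exact (withDensity_absolutelyContinuous _ _).ae_le (ae_restrict_mem measurableSet_Icc)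

lemma aux_Pi (α γ : ℝ) (hα : -(1 / 2) ≤ α) (hγ : 0 < γ) :
    ∃ C : ℝ, 0 < C ∧ ∀ D a : ℝ, 0 < D → 0 ≤ a →
      ∫⁻ u, ENNReal.ofReal ((D + (1 - u) * a) ^ (-(α + 1 / 2 + γ))) ∂(PiMeasure α)
        ≤ ENNReal.ofReal (C * ((D + a) ^ (-(α + 1 / 2)) * D ^ (-γ))) := by
  by_cases h : α = -(1 / 2)
  · refine ⟨1, one_pos, fun D a hD ha => ?_⟩
    have e : α + 1 / 2 = 0 := by rw [h]; ring
    rw [e, neg_zero, Real.rpow_zero, one_mul, one_mul, zero_add]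
    have hm : PiMeasure α univ = 1 := by
      simp only [PiMeasure, if_pos h, Measure.smul_apply, Measure.add_apply, measure_univ,
        smul_eq_mul]
      rw [one_add_one_eq_two]
      exact ENNReal.inv_mul_cancel (by norm_num) (by norm_num)
    calc _ ≤ ∫⁻ u, ENNReal.ofReal (D ^ (-γ)) ∂(PiMeasure α) := by
          refine lintegral_mono_ae ?_
          filter_upwards [aux_ae α] with u hu
          refine ENNReal.ofReal_le_ofReal ?_
          refine Real.rpow_le_rpow_of_nonpos hD ?_ (by linarith)
          nlinarith [hu.2]
      _ = _ := by rw [lintegral_const, hm, mul_one]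
  · have hA : 0 < α + 1 / 2 := by
      have : -(1 / 2) < α := lt_of_le_of_ne hα (Ne.symm h)
      linarith
    set k := Real.Gamma (α + 1) / (Real.sqrt π * Real.Gamma (α + 1 / 2)) with hk
    have hkp : 0 < k := by
      have h1 := Real.Gamma_pos_of_pos hA
      have h2 := Real.Gamma_pos_of_pos (show 0 < α + 1 by linarith)
      have := Real.pi_pos
      positivity
    refine ⟨k * (2 ^ (α + 1 / 2) * (2 / (α + 1 / 2) + 1 / γ)), by positivity,
      fun D a hD ha => ?_⟩
    unfold PiMeasure
    rw [if_neg h, ← hk]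
    calc _ ≤ _ := lintegral_withDensity_le_lintegral_mul _ (by fun_prop) _
      _ ≤ ∫⁻ u in Icc (-1) 1, ENNReal.ofReal k * ENNReal.ofReal
            ((1 - u ^ 2) ^ (α + 1 / 2 - 1) * (D + (1 - u) * a) ^ (-(α + 1 / 2 + γ))) := by
          refine setLIntegral_mono' measurableSet_Icc fun u hu => ?_
          have h1 : 0 ≤ 1 - u ^ 2 := by nlinarith [hu.1, hu.2]
          have h2 : 0 ≤ (1 - u ^ 2) ^ (α - 1 / 2) := Real.rpow_nonneg h1 _
          rw [Pi.mul_apply, ← ENNReal.ofReal_mul (by positivity),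
            ← ENNReal.ofReal_mul (by positivity), mul_assoc,
            show α + 1 / 2 - 1 = α - 1 / 2 by ring]
      _ ≤ _ := by
          rw [lintegral_const_mul' _ _ ENNReal.ofReal_ne_top, mul_assoc,
            ENNReal.ofReal_mul hkp.le]
          gcongr
          exact aux_u _ γ hA hγ D a hD ha

/-- Upper bound of the measure of a ball. -/
lemma aux_ball (α β θ r : ℝ) (hα : -(1 / 2) ≤ α) (hβ : -(1 / 2) ≤ β) (hθ : θ ∈ Ioo 0 π)
    (hr : 0 < r) :
    jacobiMeasure α β (jacobiBall θ r) ≤ ENNReal.ofReal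
      (2 * r * ((Real.sin (θ / 2) + r) ^ (2 * α + 1) * (Real.cos (θ / 2) + r) ^ (2 * β + 1))) := by
  have hm : MeasurableSet (jacobiBall θ r) := measurableSet_Ioo.inter measurableSet_Ioo
  have hs : 0 < Real.sin (θ / 2) :=
    Real.sin_pos_of_pos_of_lt_pi (by linarith [hθ.1]) (by linarith [hθ.2, hθ.1])
  have hc : 0 < Real.cos (θ / 2) :=
    Real.cos_pos_of_mem_Ioo ⟨by linarith [hθ.1, Real.pi_pos], by linarith [hθ.2]⟩
  set M := (Real.sin (θ / 2) + r) ^ (2 * α + 1) * (Real.cos (θ / 2) + r) ^ (2 * β + 1) with hM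
  have hMp : 0 < M := by positivity
  unfold jacobiMeasure
  rw [withDensity_apply _ hm, Measure.restrict_restrict hm]
  calc _ ≤ ∫⁻ x in jacobiBall θ r ∩ Ioo 0 π, ENNReal.ofReal M := by
        refine setLIntegral_mono' (hm.inter measurableSet_Ioo) fun x hx => ?_
        refine ENNReal.ofReal_le_ofReal ?_
        have hx0 := hx.2
        have hxr := hx.1.1
        have hs' : 0 < Real.sin (x / 2) :=
          Real.sin_pos_of_pos_of_lt_pi (by linarith [hx0.1]) (by linarith [hx0.2, hx0.1])
        have hc' : 0 < Real.cos (x / 2) :=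
          Real.cos_pos_of_mem_Ioo ⟨by linarith [hx0.1, Real.pi_pos], by linarith [hx0.2]⟩
        have hd : |x / 2 - θ / 2| ≤ r := by
          rw [abs_le]; constructor <;> linarith [hxr.1, hxr.2]
        have h1 := (abs_le.mp ((Real.abs_sin_sub_sin_le (x / 2) (θ / 2)).trans hd)).2
        have h2 := (abs_le.mp ((Real.abs_cos_sub_cos_le (x / 2) (θ / 2)).trans hd)).2
        refine mul_le_mul ?_ ?_ (by positivity) (by positivity)
        · exact Real.rpow_le_rpow hs'.le (by linarith) (by linarith)
        · exact Real.rpow_le_rpow hc'.le (by linarith) (by linarith)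
    _ = ENNReal.ofReal M * volume (jacobiBall θ r ∩ Ioo 0 π) := by rw [setLIntegral_const]
    _ ≤ ENNReal.ofReal M * volume (Ioo (θ - r) (θ + r)) := by
        gcongr
        exact fun x hx => hx.1.1
    _ = _ := by
        rw [Real.volume_Ioo, ← ENNReal.ofReal_mul hMp.le]
        congr 1; ring

/-- `(x+r)^2` is controlled by `d + x y` when `y` is near `x`. -/
lemma aux_sq (x y r d K : ℝ) (hx : 0 < x) (hr : 0 < r) (hy : 0 < y) (hxy : x - r / 2 ≤ y)
    (hK : 2 ≤ K) (hd : r ^ 2 ≤ K * d) : (x + r) ^ 2 ≤ 4 * K * (d + x * y) := by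
  have hd0 : 0 ≤ K * d := (sq_nonneg r).trans hd
  have hxy0 : 0 < x * y := by positivity
  rcases le_total r x with h | h
  · have : x * (x / 2) ≤ x * y := by gcongr; linarith
    have h2 : 2 * (x * y) ≤ K * (x * y) := by gcongr
    nlinarith
  · have : 0 ≤ K * (x * y) := by positivity
    nlinarith

/-- Real-number core of the final bound. -/
lemma aux_final (A B r d x y P Q L : ℝ) (hA : 0 ≤ A) (hB : 0 ≤ B) (hr : 0 < r) (hd : 0 < d)
    (hx : 0 < x) (hy : 0 < y) (hP : 0 < P) (hQ : 0 < Q) (hL : 0 < L)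
    (h1 : x ^ 2 ≤ L * P) (h2 : y ^ 2 ≤ L * Q) (h3 : r ^ 2 ≤ L * d) :
    Q ^ (-B) * (P ^ (-A) * d ^ (-(1 / 2 : ℝ))) * (2 * r * (x ^ (2 * A) * y ^ (2 * B)))
      ≤ 2 * L ^ (A + B + 1 / 2) := by
  have k : ∀ z R E : ℝ, 0 ≤ E → 0 < z → 0 < R → z ^ 2 ≤ L * R →
      R ^ (-E) * z ^ (2 * E) ≤ L ^ E := by
    intro z R E hE hz hR h
    rw [Real.rpow_mul hz.le, Real.rpow_neg hR.le, inv_mul_le_iff₀ (by positivity), mul_comm,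
      ← Real.mul_rpow hL.le hR.le]
    refine Real.rpow_le_rpow (by positivity) ?_ hE
    exact_mod_cast h
  have a1 := k x P A hA hx hP h1
  have a2 := k y Q B hB hy hQ h2
  have a3 := k r d (1 / 2) (by norm_num) hr hd h3
  rw [show (2:ℝ) * (1 / 2) = 1 by norm_num, Real.rpow_one] at a3
  calc _ = 2 * ((P ^ (-A) * x ^ (2 * A)) * (Q ^ (-B) * y ^ (2 * B)) *
          (d ^ (-(1 / 2 : ℝ)) * r)) := by ring
    _ ≤ 2 * (L ^ A * L ^ B * L ^ (1 / 2 : ℝ)) := by gcongr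
    _ = _ := by rw [Real.rpow_add hL, Real.rpow_add hL]

/-- first estimate of Lemma 4.3 in [NoSjogren]. -/
theorem double_integral_q_bound_one (α β : ℝ) (hα : -(1 / 2) ≤ α) (hβ : -(1 / 2) ≤ β) :
    ∃ C : ℝ, 0 < C ∧
      ∀ θ ∈ Ioo (0 : ℝ) π, ∀ φ ∈ Ioo (0 : ℝ) π, θ ≠ φ →
        (∫⁻ u, ∫⁻ v, ENNReal.ofReal (1 / qfun θ φ u v ^ (α + β + 3 / 2))
            ∂(PiMeasure β) ∂(PiMeasure α))
          ≤ ENNReal.ofReal C / jacobiMeasure α β (jacobiBall θ |θ - φ|) := by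
  obtain ⟨C1, hC1, H1⟩ := aux_Pi β (α + 1) hβ (by linarith)
  obtain ⟨C2, hC2, H2⟩ := aux_Pi α (1 / 2) hα (by norm_num)
  have hpi := Real.pi_pos
  set L : ℝ := 4 * (2 * π ^ 2) with hL
  have hLp : 0 < L := by positivity
  refine ⟨C1 * C2 * (2 * L ^ ((α + 1 / 2) + (β + 1 / 2) + 1 / 2)), by positivity, ?_⟩
  intro θ hθ φ hφ hne
  set r := |θ - φ| with hr
  have hrp : 0 < r := abs_pos.mpr (sub_ne_zero.mpr hne)
  have hrpi : r ≤ π := by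
    rw [hr, abs_le]; constructor <;> linarith [hθ.1, hθ.2, hφ.1, hφ.2]
  have sinp : ∀ x ∈ Ioo (0:ℝ) π, 0 < Real.sin (x / 2) := fun x hx =>
    Real.sin_pos_of_pos_of_lt_pi (by linarith [hx.1]) (by linarith [hx.2, hx.1])
  have cosp : ∀ x ∈ Ioo (0:ℝ) π, 0 < Real.cos (x / 2) := fun x hx =>
    Real.cos_pos_of_mem_Ioo ⟨by linarith [hx.1, Real.pi_pos], by linarith [hx.2]⟩
  have hsθ := sinp θ hθ
  have hsφ := sinp φ hφ
  have hcθ := cosp θ hθ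
  have hcφ := cosp φ hφ
  set a := Real.sin (θ / 2) * Real.sin (φ / 2) with ha
  set b := Real.cos (θ / 2) * Real.cos (φ / 2) with hb
  have hap : 0 < a := by positivity
  have hbp : 0 < b := by positivity
  set d := 1 - a - b with hd
  have hdeq : d = 1 - Real.cos (r / 2) := by
    have : r / 2 = |θ / 2 - φ / 2| := by
      rw [hr, ← sub_div, abs_div]; norm_num
    rw [this, Real.cos_abs, Real.cos_sub, hd, ha, hb]; ring
  have hdr : r ^ 2 ≤ 2 * π ^ 2 * d := by
    have h1 : Real.cos (r / 2) = 1 - 2 * Real.sin (r / 4) ^ 2 := by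
      rw [show r / 2 = 2 * (r / 4) by ring, Real.cos_two_mul']
      nlinarith [Real.sin_sq_add_cos_sq (r / 4)]
    have h2 := Real.mul_le_sin (x := r / 4) (by positivity) (by linarith)
    have h3 : r ≤ 2 * π * Real.sin (r / 4) := by
      have : r = 2 * π * (2 / π * (r / 4)) := by field_simp; norm_num
      calc r = 2 * π * (2 / π * (r / 4)) := this
        _ ≤ _ := by gcongr
    have h4 : r ^ 2 ≤ (2 * π * Real.sin (r / 4)) ^ 2 := by gcongr
    rw [hdeq, h1]
    nlinarith
  have hdp : 0 < d := by
    by_contra hcon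
    have : 2 * π ^ 2 * d ≤ 0 := mul_nonpos_of_nonneg_of_nonpos (by positivity) (not_lt.mp hcon)
    nlinarith [pow_pos hrp 2]
  have hdist : |θ / 2 - φ / 2| ≤ r / 2 := by
    rw [← sub_div, abs_div, abs_two]
  have hs1 : Real.sin (θ / 2) - r / 2 ≤ Real.sin (φ / 2) := by
    have := (abs_le.mp ((Real.abs_sin_sub_sin_le (θ / 2) (φ / 2)).trans hdist)).2
    linarith
  have hc1 : Real.cos (θ / 2) - r / 2 ≤ Real.cos (φ / 2) := by
    have := (abs_le.mp ((Real.abs_cos_sub_cos_le (θ / 2) (φ / 2)).trans hdist)).2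
    linarith
  have hK : (2:ℝ) ≤ 2 * π ^ 2 := by nlinarith [Real.pi_gt_three]
  have q1 := aux_sq _ _ r d _ hsθ hrp hsφ hs1 hK hdr
  have q2 := aux_sq _ _ r d _ hcθ hrp hcφ hc1 hK hdr
  have q3 : r ^ 2 ≤ L * d := by
    rw [hL]; nlinarith [sq_nonneg r]
  have main : (∫⁻ u, ∫⁻ v, ENNReal.ofReal (1 / qfun θ φ u v ^ (α + β + 3 / 2))
            ∂(PiMeasure β) ∂(PiMeasure α)) ≤ ENNReal.ofReal (C1 * C2 *
      ((d + b) ^ (-(β + 1 / 2)) * ((d + a) ^ (-(α + 1 / 2)) * d ^ (-(1 / 2 : ℝ))))) := by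
    calc _ ≤ ∫⁻ u, ENNReal.ofReal (C1 * (d + b) ^ (-(β + 1 / 2))) *
            ENNReal.ofReal ((d + (1 - u) * a) ^ (-(α + 1 / 2 + 1 / 2))) ∂(PiMeasure α) := by
          refine lintegral_mono_ae ?_
          filter_upwards [aux_ae α] with u hu
          have hu0 : 0 ≤ (1 - u) * a := mul_nonneg (by linarith [hu.2]) hap.le
          have hDp : 0 < d + (1 - u) * a := by positivity
          calc _ = ∫⁻ v, ENNReal.ofReal (((d + (1 - u) * a) + (1 - v) * b) ^
                    (-(β + 1 / 2 + (α + 1)))) ∂(PiMeasure β) := by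
                refine lintegral_congr_ae ?_
                filter_upwards [aux_ae β] with v hv
                have hv0 : 0 ≤ (1 - v) * b := mul_nonneg (by linarith [hv.2]) hbp.le
                have hq : qfun θ φ u v = (d + (1 - u) * a) + (1 - v) * b := by
                  rw [hd, ha, hb, qfun]; ring
                rw [hq, Real.rpow_neg (by positivity), one_div]
                congr 3; ring
            _ ≤ _ := H1 _ b hDp hbp.le
            _ ≤ _ := by
                rw [← ENNReal.ofReal_mul (by positivity)]
                refine ENNReal.ofReal_le_ofReal ?_
                rw [mul_assoc, show α + 1 / 2 + 1 / 2 = α + 1 by ring]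
                have : (d + (1 - u) * a + b) ^ (-(β + 1 / 2)) ≤ (d + b) ^ (-(β + 1 / 2)) :=
                  Real.rpow_le_rpow_of_nonpos (by positivity) (by linarith) (by linarith)
                gcongr
      _ ≤ _ := by
          rw [lintegral_const_mul' _ _ ENNReal.ofReal_ne_top]
          calc _ ≤ _ := mul_le_mul_right (H2 d a hdp hap.le) _
            _ = _ := by
              rw [← ENNReal.ofReal_mul (by positivity)]
              congr 1; ring
  have hball := aux_ball α β θ r hα hβ hθ hrp
  rw [ENNReal.le_div_iff_mul_le]
  · refine (mul_le_mul' main hball).trans ?_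
    rw [← ENNReal.ofReal_mul (by positivity)]
    refine ENNReal.ofReal_le_ofReal ?_
    rw [mul_assoc (C1 * C2)]
    refine mul_le_mul_of_nonneg_left ?_ (by positivity)
    have := aux_final (α + 1 / 2) (β + 1 / 2) r d (Real.sin (θ / 2) + r) (Real.cos (θ / 2) + r)
      (d + a) (d + b) L (by linarith) (by linarith) hrp hdp (by positivity) (by positivity)
      (by positivity) (by positivity) hLp q1 q2 q3
    rw [show 2 * (α + 1 / 2) = 2 * α + 1 by ring, show 2 * (β + 1 / 2) = 2 * β + 1 by ring] at this
    exact this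
  · right
    rw [Ne, ENNReal.ofReal_eq_zero, not_le]
    positivity
  · right
    exact ENNReal.ofReal_ne_top
end

section
/- Let α, β ≥ -1/2. There exists a constant C depending only on α and β such that for all θ, φ ∈ (0,π) with θ ≠ φ one has ∬_{[-1,1]²} dΠ_α(u) dΠ_β(v) / q(θ,φ,u,v)^{α+β+2} ≤ C / ( |θ-φ| · μ_{α,β}^+(B(θ, |θ-φ|)) ). -/
open MeasureTheory Real Set

lemma J_bound (s : ℝ) (hs : 0 < s) (A a : ℝ) (hA : 0 < A) (ha : 0 ≤ a) :
    ∫⁻ x in Icc (0:ℝ) 1, ENNReal.ofReal (x ^ (s - 1) * (A + a * x) ^ (-(s + 1)))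
      ≤ ENNReal.ofReal ((A + a) ^ (-s) * A⁻¹ / s) := by
  have hpos : ∀ x : ℝ, 0 ≤ x → 0 < A + a * x := fun x hx => by positivity
  have hcont : ContinuousOn (fun x : ℝ => x ^ s * (A + a * x) ^ (-s) * (A⁻¹ / s)) (Icc 0 1) := by
    apply ContinuousOn.mul _ continuousOn_const
    apply ContinuousOn.mul
    · exact (Real.continuous_rpow_const hs.le).continuousOn
    · apply ContinuousOn.rpow_const (by fun_prop)
      intro x hx
      exact Or.inl (hpos x hx.1).ne'
  have hder : ∀ x ∈ Ioo (0:ℝ) 1,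
      HasDerivAt (fun x : ℝ => x ^ s * (A + a * x) ^ (-s) * (A⁻¹ / s))
        (x ^ (s - 1) * (A + a * x) ^ (-(s + 1))) x := by
    intro x hx
    have hp := hpos x hx.1.le
    have h1 : HasDerivAt (fun x : ℝ => x ^ s) (s * x ^ (s - 1)) x :=
      Real.hasDerivAt_rpow_const (Or.inl hx.1.ne')
    have h0 : HasDerivAt (fun x : ℝ => A + a * x) a x := by
      simpa using ((hasDerivAt_id x).const_mul a).const_add A
    have h2 := h0.rpow_const (p := -s) (Or.inl hp.ne')
    refine ((h1.mul h2).mul_const (A⁻¹ / s)).congr_deriv ?_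
    have e1 : x ^ s = x ^ (s - 1) * x := by
      rw [← Real.rpow_add_one hx.1.ne']; ring_nf
    have e2 : (A + a * x) ^ (-s) = (A + a * x) ^ (-(s + 1)) * (A + a * x) := by
      rw [← Real.rpow_add_one hp.ne']; ring_nf
    have e3 : (-s - 1) = -(s + 1) := by ring
    rw [e3, e2, e1]
    field_simp
    ring
  have hnn : ∀ x ∈ Ioo (0:ℝ) 1, 0 ≤ x ^ (s - 1) * (A + a * x) ^ (-(s + 1)) := by
    intro x hx
    have := hpos x hx.1.le
    have := hx.1
    positivity
  have hint := intervalIntegral.integrableOn_deriv_of_nonneg hcont hder hnn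
  have hI := intervalIntegral.integral_eq_sub_of_hasDerivAt_of_le zero_le_one hcont hder
    ((intervalIntegrable_iff_integrableOn_Ioc_of_le zero_le_one).2 hint)
  rw [intervalIntegral.integral_of_le zero_le_one] at hI
  rw [setLIntegral_congr Ioc_ae_eq_Icc.symm, ← ofReal_integral_eq_lintegral_ofReal hint, hI]
  · apply ENNReal.ofReal_le_ofReal
    rw [Real.zero_rpow hs.ne', Real.one_rpow]
    apply le_of_eq; ring_nf
  · rw [← restrict_Ioo_eq_restrict_Ioc]
    filter_upwards [ae_restrict_mem measurableSet_Ioo] with x hx using hnn x hx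

lemma Pi_bound (ν : ℝ) (hν : -(1 / 2) ≤ ν) : ∃ C : ℝ, 0 < C ∧ ∀ A a : ℝ, 0 < A → 0 ≤ a →
    ∫⁻ u, ENNReal.ofReal ((A + a * (1 - u)) ^ (-((ν + 1 / 2) + 1))) ∂(PiMeasure ν)
      ≤ ENNReal.ofReal (C * ((A + a) ^ (-(ν + 1 / 2)) * A⁻¹)) := by
  by_cases h : ν = -(1 / 2)
  · subst h
    refine ⟨1, one_pos, fun A a hA ha => ?_⟩
    simp only [PiMeasure, if_true]
    rw [lintegral_smul_measure, lintegral_add_measure, lintegral_dirac, lintegral_dirac]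
    norm_num
    rw [Real.rpow_neg_one, Real.rpow_neg_one]
    have : ENNReal.ofReal (A + a * 2)⁻¹ ≤ ENNReal.ofReal A⁻¹ := by
      apply ENNReal.ofReal_le_ofReal
      gcongr
      linarith
    calc (2:ENNReal)⁻¹ * (ENNReal.ofReal (A + a * 2)⁻¹ + ENNReal.ofReal A⁻¹)
        ≤ 2⁻¹ * (ENNReal.ofReal A⁻¹ + ENNReal.ofReal A⁻¹) := by gcongr
      _ = ENNReal.ofReal A⁻¹ := by
        rw [← two_mul, ← mul_assoc, ENNReal.inv_mul_cancel (by simp) (by simp), one_mul]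
  · obtain ⟨s, hs⟩ : ∃ s, s = ν + 1 / 2 := ⟨_, rfl⟩
    have hs0 : 0 < s := by
      rcases lt_or_eq_of_le hν with h' | h'
      · linarith
      · exact absurd h'.symm h
    rw [← hs]
    set c := Real.Gamma (ν + 1) / (Real.sqrt π * Real.Gamma (ν + 1 / 2)) with hc
    have hc0 : 0 < c := by
      have := Real.Gamma_pos_of_pos (show 0 < ν + 1 by linarith)
      have := Real.Gamma_pos_of_pos (show 0 < ν + 1 / 2 by linarith)
      positivity
    refine ⟨2 * (c * 2 ^ s / s), by positivity, fun A a hA ha => ?_⟩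
    have e : ν - 1 / 2 = s - 1 := by rw [hs]; ring
    simp only [PiMeasure, if_neg h, ← hc, e]
    refine (lintegral_withDensity_le_lintegral_mul _ (by fun_prop) _).trans ?_
    rw [← Icc_union_Icc_eq_Icc (show (-1:ℝ) ≤ 0 by norm_num) (show (0:ℝ) ≤ 1 by norm_num)]
    refine (lintegral_union_le _ _ _).trans ?_
    have hM : Measurable fun x : ℝ =>
        ENNReal.ofReal (x ^ (s - 1) * (A + a * x) ^ (-(s + 1))) := by fun_prop
    set f : ℝ → ENNReal := fun x =>
      ENNReal.ofReal (x ^ (s - 1) * (A + a * x) ^ (-(s + 1))) with hf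
    have hJ : ∫⁻ x in Icc (0:ℝ) 1, f x ≤ _ := J_bound s hs0 A a hA ha
    have r1 : ∫⁻ u in Icc (0:ℝ) 1, f (1 - u) = ∫⁻ x in Icc (0:ℝ) 1, f x := by
      have := (Measure.measurePreserving_sub_left (volume : Measure ℝ) 1).setLIntegral_comp_preimage
        (s := Icc (0:ℝ) 1) measurableSet_Icc hM
      simpa using this
    have r2 : ∫⁻ u in Icc (-1:ℝ) 0, f (1 + u) = ∫⁻ x in Icc (0:ℝ) 1, f x := by
      have := (measurePreserving_add_left (volume : Measure ℝ) 1).setLIntegral_comp_preimage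
        (s := Icc (0:ℝ) 1) measurableSet_Icc hM
      simpa using this
    have key : ∀ x ∈ Ioo (0:ℝ) 1, ∀ y, x ≤ y → ∀ u, 1 - u ^ 2 = x * (2 - x) →
        ENNReal.ofReal (c * (1 - u ^ 2) ^ (s - 1)) *
          ENNReal.ofReal ((A + a * y) ^ (-(s + 1))) ≤ ENNReal.ofReal (c * 2 ^ s) * f x := by
      intro x hx y hxy u hu
      have hx0 := hx.1
      have hx1 := hx.2
      rw [hf, hu, Real.mul_rpow hx0.le (by linarith)]
      have h2 : 0 < 2 - x := by linarith
      have hAx : 0 < A + a * x := by positivity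
      have hb : (2 - x) ^ (s - 1) ≤ 2 ^ s := by
        calc (2 - x) ^ (s - 1) ≤ (2 - x) ^ s :=
              Real.rpow_le_rpow_of_exponent_le (by linarith) (by linarith)
          _ ≤ 2 ^ s := Real.rpow_le_rpow h2.le (by linarith) hs0.le
      have hAy : 0 < A + a * y := by
        have := hx0.trans_le hxy
        positivity
      have hd : (A + a * y) ^ (-(s + 1)) ≤ (A + a * x) ^ (-(s + 1)) :=
        Real.rpow_le_rpow_of_nonpos hAx (by gcongr) (by linarith)
      rw [← ENNReal.ofReal_mul (by positivity), ← ENNReal.ofReal_mul (by positivity)]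
      apply ENNReal.ofReal_le_ofReal
      calc c * (x ^ (s - 1) * (2 - x) ^ (s - 1)) * (A + a * y) ^ (-(s + 1))
          ≤ c * (x ^ (s - 1) * 2 ^ s) * (A + a * x) ^ (-(s + 1)) := by gcongr
        _ = _ := by ring
    have b1 : ∫⁻ u in Icc (0:ℝ) 1, ((fun u => ENNReal.ofReal (c * (1 - u ^ 2) ^ (s - 1))) *
        fun u => ENNReal.ofReal ((A + a * (1 - u)) ^ (-(s + 1)))) u
          ≤ ENNReal.ofReal (c * 2 ^ s) * ∫⁻ x in Icc (0:ℝ) 1, f x := by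
      rw [← r1, ← lintegral_const_mul _ (by fun_prop)]
      rw [← restrict_Ioo_eq_restrict_Icc]
      apply setLIntegral_mono' measurableSet_Ioo
      intro u hu
      exact key (1 - u) ⟨by linarith [hu.2], by linarith [hu.1]⟩ _ le_rfl u (by ring)
    have b2 : ∫⁻ u in Icc (-1:ℝ) 0, ((fun u => ENNReal.ofReal (c * (1 - u ^ 2) ^ (s - 1))) *
        fun u => ENNReal.ofReal ((A + a * (1 - u)) ^ (-(s + 1)))) u
          ≤ ENNReal.ofReal (c * 2 ^ s) * ∫⁻ x in Icc (0:ℝ) 1, f x := by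
      rw [← r2, ← lintegral_const_mul _ (by fun_prop)]
      rw [← restrict_Ioo_eq_restrict_Icc]
      apply setLIntegral_mono' measurableSet_Ioo
      intro u hu
      exact key (1 + u) ⟨by linarith [hu.1], by linarith [hu.2]⟩ _ (by linarith [hu.2]) u (by ring)
    refine (add_le_add b2 b1).trans ?_
    rw [← two_mul]
    calc _ ≤ 2 * (ENNReal.ofReal (c * 2 ^ s) * ENNReal.ofReal ((A + a) ^ (-s) * A⁻¹ / s)) := by
          gcongr
      _ = ENNReal.ofReal 2 * (ENNReal.ofReal (c * 2 ^ s) *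
            ENNReal.ofReal ((A + a) ^ (-s) * A⁻¹ / s)) := by simp
      _ ≤ _ := by
          rw [← ENNReal.ofReal_mul (by positivity), ← ENNReal.ofReal_mul (by positivity)]
          apply ENNReal.ofReal_le_ofReal
          apply le_of_eq
          ring

lemma Pi_supp (ν : ℝ) : ∀ᵐ u ∂(PiMeasure ν), u ∈ Icc (-1:ℝ) 1 := by
  unfold PiMeasure
  split_ifs with h
  · apply Measure.ae_smul_measure
    rw [ae_add_measure_iff]
    constructor
    · exact (ae_dirac_iff measurableSet_Icc).2 (by norm_num)
    · exact (ae_dirac_iff measurableSet_Icc).2 (by norm_num)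
  · apply (withDensity_absolutelyContinuous _ _).ae_le
    exact ae_restrict_mem measurableSet_Icc

lemma sq_aux (x y z d a : ℝ) (hx : 0 ≤ x) (hz : 0 ≤ z)
    (h1 : z ≤ x + d / 2) (h2 : x ≤ y + d / 2) (ha : a = x * y) : z ^ 2 ≤ 4 * a + d ^ 2 := by
  have e1 : z ^ 2 ≤ (x + d / 2) ^ 2 := by gcongr
  have e2 : x * x ≤ x * (y + d / 2) := by gcongr
  nlinarith [sq_nonneg (x - d / 2)]

lemma mu_bound (α β : ℝ) (hα : -(1 / 2) ≤ α) (hβ : -(1 / 2) ≤ β) (θ d P Q : ℝ)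
    (hd : 0 < d)
    (hP : ∀ t ∈ jacobiBall θ d, Real.sin (t / 2) ^ 2 ≤ P)
    (hQ : ∀ t ∈ jacobiBall θ d, Real.cos (t / 2) ^ 2 ≤ Q) (hP0 : 0 ≤ P) (hQ0 : 0 ≤ Q) :
    jacobiMeasure α β (jacobiBall θ d) ≤
      ENNReal.ofReal (P ^ (α + 1 / 2) * Q ^ (β + 1 / 2) * (2 * d)) := by
  have hm : MeasurableSet (jacobiBall θ d) := measurableSet_Ioo.inter measurableSet_Ioo
  rw [jacobiMeasure, withDensity_apply _ hm]
  calc _ ≤ ∫⁻ t in jacobiBall θ d, ENNReal.ofReal (P ^ (α + 1 / 2) * Q ^ (β + 1 / 2))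
        ∂(volume.restrict (Ioo 0 π)) := by
        apply setLIntegral_mono' hm
        intro t ht
        apply ENNReal.ofReal_le_ofReal
        have ht0 := ht.2.1
        have ht1 := ht.2.2
        have hs : 0 ≤ Real.sin (t / 2) := Real.sin_nonneg_of_nonneg_of_le_pi (by linarith) (by linarith)
        have hc : 0 ≤ Real.cos (t / 2) := Real.cos_nonneg_of_neg_pi_div_two_le_of_le (by linarith) (by linarith)
        have e1 : Real.sin (t / 2) ^ (2 * α + 1) = (Real.sin (t / 2) ^ 2) ^ (α + 1 / 2) := by
          rw [← Real.rpow_natCast_mul hs]; congr 1; push_cast; ring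
        have e2 : Real.cos (t / 2) ^ (2 * β + 1) = (Real.cos (t / 2) ^ 2) ^ (β + 1 / 2) := by
          rw [← Real.rpow_natCast_mul hc]; congr 1; push_cast; ring
        rw [e1, e2]
        have h1 := Real.rpow_le_rpow (sq_nonneg _) (hP t ht) (show 0 ≤ α + 1 / 2 by linarith)
        have h2 := Real.rpow_le_rpow (sq_nonneg _) (hQ t ht) (show 0 ≤ β + 1 / 2 by linarith)
        gcongr
    _ = ENNReal.ofReal (P ^ (α + 1 / 2) * Q ^ (β + 1 / 2)) *
          (volume.restrict (Ioo 0 π)) (jacobiBall θ d) := by rw [setLIntegral_const]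
    _ ≤ ENNReal.ofReal (P ^ (α + 1 / 2) * Q ^ (β + 1 / 2)) * volume (Ioo (θ - d) (θ + d)) := by
        apply mul_le_mul_right
        exact (Measure.restrict_apply_le _ _).trans (measure_mono inter_subset_left)
    _ = _ := by
        rw [Real.volume_Ioo, ← ENNReal.ofReal_mul (by positivity)]
        congr 2; ring

/-- second estimate of Lemma 4.3 in [NoSjogren]. -/
theorem double_integral_q_bound_two (α β : ℝ) (hα : -(1 / 2) ≤ α) (hβ : -(1 / 2) ≤ β) :
    ∃ C : ℝ, 0 < C ∧
      ∀ θ ∈ Ioo (0 : ℝ) π, ∀ φ ∈ Ioo (0 : ℝ) π, θ ≠ φ →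
        (∫⁻ u, ∫⁻ v, ENNReal.ofReal (1 / qfun θ φ u v ^ (α + β + 2))
            ∂(PiMeasure β) ∂(PiMeasure α))
          ≤ ENNReal.ofReal C /
              (ENNReal.ofReal |θ - φ| * jacobiMeasure α β (jacobiBall θ |θ - φ|)) := by
  obtain ⟨C₁, hC₁, H₁⟩ := Pi_bound α hα
  obtain ⟨C₂, hC₂, H₂⟩ := Pi_bound β hβ
  obtain ⟨s, hs⟩ : ∃ s, s = α + 1 / 2 := ⟨_, rfl⟩
  obtain ⟨r, hr⟩ : ∃ r, r = β + 1 / 2 := ⟨_, rfl⟩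
  have hs0 : 0 ≤ s := by linarith
  have hr0 : 0 ≤ r := by linarith
  rw [← hs] at H₁
  rw [← hr] at H₂
  refine ⟨C₁ * C₂ * (20 ^ s * 20 ^ r * 40), by positivity, ?_⟩
  intro θ hθ φ hφ hne
  have hd : 0 < |θ - φ| := abs_pos.2 (sub_ne_zero.2 hne)
  obtain ⟨d, hdd⟩ : ∃ d, d = |θ - φ| := ⟨_, rfl⟩
  rw [← hdd] at hd ⊢
  have sn : ∀ t ∈ Ioo (0:ℝ) π, 0 < Real.sin (t / 2) := fun t ht =>
    Real.sin_pos_of_pos_of_lt_pi (by linarith [ht.1]) (by linarith [ht.1, ht.2])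
  have cn : ∀ t ∈ Ioo (0:ℝ) π, 0 < Real.cos (t / 2) := fun t ht =>
    Real.cos_pos_of_mem_Ioo ⟨by linarith [ht.1, ht.2], by linarith [ht.1, ht.2]⟩
  obtain ⟨a, ha⟩ : ∃ a, a = Real.sin (θ / 2) * Real.sin (φ / 2) := ⟨_, rfl⟩
  obtain ⟨b, hb⟩ : ∃ b, b = Real.cos (θ / 2) * Real.cos (φ / 2) := ⟨_, rfl⟩
  have ha0 : 0 < a := ha ▸ mul_pos (sn θ hθ) (sn φ hφ)
  have hb0 : 0 < b := hb ▸ mul_pos (cn θ hθ) (cn φ hφ)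
  obtain ⟨D, hD⟩ : ∃ D, D = 1 - a - b := ⟨_, rfl⟩
  have hdsq : d ^ 2 = (θ - φ) ^ 2 := by rw [hdd, sq_abs]
  have hDd : d ^ 2 ≤ 20 * D := by
    have hle : |(θ - φ) / 2| ≤ π := by
      rw [abs_le]; constructor <;> linarith [hθ.1, hθ.2, hφ.1, hφ.2]
    have h1 := Real.cos_le_one_sub_mul_cos_sq hle
    have h2 : Real.cos ((θ - φ) / 2) = a + b := by
      rw [sub_div, Real.cos_sub, ha, hb]; ring
    have h3 : 1 / 10 ≤ 1 / π ^ 2 := by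
      apply one_div_le_one_div_of_le (by positivity)
      nlinarith [Real.pi_lt_d2, Real.pi_pos]
    rw [h2] at h1
    have h4 : 2 / π ^ 2 * ((θ - φ) / 2) ^ 2 = 1 / π ^ 2 * d ^ 2 / 2 := by rw [hdsq]; ring
    rw [h4] at h1
    nlinarith [sq_nonneg d]
  have hD0 : 0 < D := by nlinarith
  -- double integral bound
  have hI : (∫⁻ u, ∫⁻ v, ENNReal.ofReal (1 / qfun θ φ u v ^ (α + β + 2))
            ∂(PiMeasure β) ∂(PiMeasure α)) ≤
      ENNReal.ofReal (C₂ * (D + b) ^ (-r)) * ENNReal.ofReal (C₁ * ((D + a) ^ (-s) * D⁻¹)) := by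
    refine le_trans ?_ (mul_le_mul_right (H₁ D a hD0 ha0.le) _)
    rw [← lintegral_const_mul _ (by fun_prop)]
    apply lintegral_mono_ae
    filter_upwards [Pi_supp α] with u hu
    have hu1 : 0 ≤ 1 - u := by linarith [hu.2]
    obtain ⟨A, hA⟩ : ∃ A, A = D + a * (1 - u) := ⟨_, rfl⟩
    have hAD : D ≤ A := by rw [hA]; nlinarith
    have hA0 : 0 < A := by linarith
    rw [← hA]
    calc ∫⁻ v, ENNReal.ofReal (1 / qfun θ φ u v ^ (α + β + 2)) ∂(PiMeasure β)
        ≤ ∫⁻ v, ENNReal.ofReal (A ^ (-s)) * ENNReal.ofReal ((A + b * (1 - v)) ^ (-(r + 1)))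
            ∂(PiMeasure β) := by
          apply lintegral_mono_ae
          filter_upwards [Pi_supp β] with v hv
          have hv1 : 0 ≤ 1 - v := by linarith [hv.2]
          have hX : A ≤ A + b * (1 - v) := by nlinarith
          have hq : qfun θ φ u v = A + b * (1 - v) := by
            rw [qfun, hA, hD, ha, hb]; ring
          have hX0 : 0 < A + b * (1 - v) := by linarith
          rw [← ENNReal.ofReal_mul (by positivity), hq]
          apply ENNReal.ofReal_le_ofReal
          rw [one_div, ← Real.rpow_neg hX0.le,
            show -(α + β + 2) = -s + -(r + 1) by rw [hs, hr]; ring, Real.rpow_add hX0]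
          gcongr ?_ * _
          exact Real.rpow_le_rpow_of_nonpos hA0 hX (by linarith)
      _ = ENNReal.ofReal (A ^ (-s)) * ∫⁻ v, ENNReal.ofReal ((A + b * (1 - v)) ^ (-(r + 1)))
            ∂(PiMeasure β) := lintegral_const_mul _ (by fun_prop)
      _ ≤ ENNReal.ofReal (A ^ (-s)) * ENNReal.ofReal (C₂ * ((A + b) ^ (-r) * A⁻¹)) := by
          gcongr
          exact H₂ A b hA0 hb0.le
      _ ≤ _ := by
          rw [← ENNReal.ofReal_mul (by positivity), ← ENNReal.ofReal_mul (by positivity)]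
          apply ENNReal.ofReal_le_ofReal
          have e : A ^ (-(s + 1)) = A ^ (-s) * A⁻¹ := by
            rw [← Real.rpow_neg_one, ← Real.rpow_add hA0]; ring_nf
          have h := Real.rpow_le_rpow_of_nonpos (show 0 < D + b by linarith)
            (show D + b ≤ A + b by linarith) (show -r ≤ 0 by linarith)
          rw [e]
          calc A ^ (-s) * (C₂ * ((A + b) ^ (-r) * A⁻¹))
              ≤ A ^ (-s) * (C₂ * ((D + b) ^ (-r) * A⁻¹)) := by gcongr
            _ = _ := by ring
  -- measure bound
  have hab : ∀ x y : ℝ, |x - y| ≤ d → |x / 2 - y / 2| ≤ d / 2 := by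
    intro x y h
    rw [← sub_div, abs_div, abs_two]
    linarith
  have hball : ∀ t ∈ jacobiBall θ d, |t - θ| ≤ d := by
    intro t ht
    rw [abs_le]; constructor <;> linarith [ht.1.1, ht.1.2]
  have hμ : jacobiMeasure α β (jacobiBall θ d) ≤
      ENNReal.ofReal ((20 * (D + a)) ^ s * (20 * (D + b)) ^ r * (2 * d)) := by
    rw [hs, hr]
    apply mu_bound α β hα hβ θ d _ _ hd _ _ (by positivity) (by positivity)
    · intro t ht
      have h1 := (Real.abs_sin_sub_sin_le (t / 2) (θ / 2)).trans (hab _ _ (hball t ht))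
      have h2 := (Real.abs_sin_sub_sin_le (θ / 2) (φ / 2)).trans (hab _ _ hdd.ge)
      have := sq_aux _ _ _ d a (sn θ hθ).le (sn t ht.2).le
        (by linarith [(abs_le.1 h1).2]) (by linarith [(abs_le.1 h2).2]) ha
      linarith
    · intro t ht
      have h1 := (Real.abs_cos_sub_cos_le (t / 2) (θ / 2)).trans (hab _ _ (hball t ht))
      have h2 := (Real.abs_cos_sub_cos_le (θ / 2) (φ / 2)).trans (hab _ _ hdd.ge)
      have := sq_aux _ _ _ d b (cn θ hθ).le (cn t ht.2).le
        (by linarith [(abs_le.1 h1).2]) (by linarith [(abs_le.1 h2).2]) hb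
      linarith
  rw [ENNReal.le_div_iff_mul_le (Or.inr (by simp; positivity)) (Or.inr ENNReal.ofReal_ne_top)]
  refine (mul_le_mul' hI (mul_le_mul' le_rfl hμ)).trans ?_
  rw [← ENNReal.ofReal_mul (by positivity), ← ENNReal.ofReal_mul (by positivity),
    ← ENNReal.ofReal_mul (by positivity)]
  apply ENNReal.ofReal_le_ofReal
  rw [Real.mul_rpow (by norm_num) (by positivity), Real.mul_rpow (by norm_num) (by positivity),
    Real.rpow_neg (by positivity), Real.rpow_neg (by positivity)]
  have p1 : 0 < (D + a) ^ s := by positivity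
  have p2 : 0 < (D + b) ^ r := by positivity
  have e : C₂ * ((D + b) ^ r)⁻¹ * (C₁ * (((D + a) ^ s)⁻¹ * D⁻¹)) *
      (d * (20 ^ s * (D + a) ^ s * (20 ^ r * (D + b) ^ r) * (2 * d))) =
      C₁ * C₂ * (20 ^ s * 20 ^ r * (2 * (d ^ 2 / D))) := by
    field_simp
  rw [e]
  have h : d ^ 2 / D ≤ 20 := by rw [div_le_iff₀ hD0]; exact hDd
  gcongr
  linarith
end

section
/- Let α, β ≥ -1/2 and γ₁, γ₂, κ, κ₁, κ₂ ≥ 0. There exists a constant C depending only on these parameters such that for all θ, φ ∈ (0,π) with θ ≠ φ one has (sin(θ/2)+sin(φ/2))^{2γ₁} (cos(θ/2)+cos(φ/2))^{2γ₂} ∬_{[-1,1]²} dΠ_{α+γ₁+κ+κ₁}(u) dΠ_{β+γ₂+κ+κ₂}(v) / q(θ,φ,u,v)^{α+β+2+γ₁+γ₂+κ} ≤ C / ( |θ-φ| · μ_{α,β}^+(B(θ, |θ-φ|)) ). -/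
open MeasureTheory Real Set

/-- core one-dimensional estimate -/
lemma core_bound (l p D x : ℝ) (hl : 0 < l) (hp : l < p) (hD : 0 < D) (hx : 0 < x) :
    ∫⁻ t in Ioc (0:ℝ) 1, ENNReal.ofReal (t ^ (l - 1) * (1 / (D + t * x) ^ p)) ≤
      ENNReal.ofReal ((1 / l + 1 / (p - l)) * ((D + x) ^ (-l) * D ^ (-(p - l)))) := by
  set T : ℝ := D / (D + x) with hT
  have hDx : 0 < D + x := by positivity
  have hT0 : 0 < T := by positivity
  have hT1 : T ≤ 1 := by rw [hT, div_le_one hDx]; linarith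
  have hTe : ∀ e : ℝ, T ^ e = D ^ e * (D + x) ^ (-e) := by
    intro e
    rw [hT, Real.div_rpow hD.le hDx.le, Real.rpow_neg hDx.le]; rfl
  rw [← Ioc_union_Ioc_eq_Ioc hT0.le hT1]
  refine (lintegral_union_le _ _ _).trans ?_
  have h1 : ∫⁻ t in Ioc (0:ℝ) T, ENNReal.ofReal (t ^ (l - 1) * (1 / (D + t * x) ^ p)) ≤
      ENNReal.ofReal ((1 / l) * ((D + x) ^ (-l) * D ^ (-(p - l)))) := by
    have hI : IntegrableOn (fun t : ℝ => t ^ (l - 1) * D ^ (-p)) (Ioc 0 T) := by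
      have := (intervalIntegral.intervalIntegrable_rpow' (a := 0) (b := T) (r := l - 1)
        (by linarith))
      rw [intervalIntegrable_iff_integrableOn_Ioc_of_le hT0.le] at this
      exact this.mul_const _
    calc _ ≤ ∫⁻ t in Ioc (0:ℝ) T, ENNReal.ofReal (t ^ (l - 1) * D ^ (-p)) := by
          refine setLIntegral_mono' measurableSet_Ioc fun t ht => ENNReal.ofReal_le_ofReal ?_
          have ht0 := ht.1
          rw [Real.rpow_neg hD.le, one_div]
          have : D ≤ D + t * x := by nlinarith [mul_pos ht0 hx]
          have hpp : 0 ≤ p := by linarith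
          gcongr
      _ = ENNReal.ofReal (∫ t in Ioc (0:ℝ) T, t ^ (l - 1) * D ^ (-p)) := by
          rw [ofReal_integral_eq_lintegral_ofReal hI]
          refine (ae_restrict_iff' measurableSet_Ioc).2 (Filter.Eventually.of_forall fun t ht => ?_)
          have := ht.1
          simp only [Pi.zero_apply]
          positivity
      _ ≤ _ := by
          apply ENNReal.ofReal_le_ofReal
          rw [integral_mul_const, ← intervalIntegral.integral_of_le hT0.le,
            integral_rpow (Or.inl (by linarith)), sub_add_cancel, Real.zero_rpow hl.ne', hTe,
            show -(p - l) = l + -p by ring, Real.rpow_add hD]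
          apply le_of_eq; ring
  have h2 : ∫⁻ t in Ioc (T:ℝ) 1, ENNReal.ofReal (t ^ (l - 1) * (1 / (D + t * x) ^ p)) ≤
      ENNReal.ofReal ((1 / (p - l)) * ((D + x) ^ (-l) * D ^ (-(p - l)))) := by
    have hI : IntegrableOn (fun t : ℝ => t ^ (l - 1 - p) * (D + x) ^ (-p)) (Ioi T) :=
      (integrableOn_Ioi_rpow_of_lt (by linarith) hT0).mul_const _
    calc _ ≤ ∫⁻ t in Ioc (T:ℝ) 1, ENNReal.ofReal (t ^ (l - 1 - p) * (D + x) ^ (-p)) := by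
          refine setLIntegral_mono' measurableSet_Ioc fun t ht => ENNReal.ofReal_le_ofReal ?_
          have ht0 : 0 < t := hT0.trans ht.1
          have ht1 := ht.2
          have hpp : 0 ≤ p := by linarith
          have hre : t ^ (l - 1 - p) * (D + x) ^ (-p) = t ^ (l - 1) * (1 / (t * (D + x)) ^ p) := by
            rw [Real.rpow_neg hDx.le, Real.rpow_sub ht0 (l - 1) p, Real.mul_rpow ht0.le hDx.le]
            field_simp
          rw [hre]
          have : t * (D + x) ≤ D + t * x := by nlinarith
          gcongr
      _ ≤ ∫⁻ t in Ioi T, ENNReal.ofReal (t ^ (l - 1 - p) * (D + x) ^ (-p)) :=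
          lintegral_mono_set Ioc_subset_Ioi_self
      _ = ENNReal.ofReal (∫ t in Ioi T, t ^ (l - 1 - p) * (D + x) ^ (-p)) := by
          rw [ofReal_integral_eq_lintegral_ofReal hI]
          refine (ae_restrict_iff' measurableSet_Ioi).2 (Filter.Eventually.of_forall fun t ht => ?_)
          have : 0 < t := hT0.trans ht
          simp only [Pi.zero_apply]
          positivity
      _ ≤ _ := by
          apply ENNReal.ofReal_le_ofReal
          rw [integral_mul_const, integral_Ioi_rpow_of_lt (by linarith) hT0,
            show l - 1 - p + 1 = -(p - l) by ring, hTe, show -l = -p + - -(p-l) by ring,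
            Real.rpow_add hDx, neg_div_neg_eq]
          apply le_of_eq; ring
  refine (add_le_add h1 h2).trans ?_
  have : 0 < p - l := by linarith
  rw [← ENNReal.ofReal_add (by positivity) (by positivity)]
  apply ENNReal.ofReal_le_ofReal
  apply le_of_eq; ring

lemma one_add_rpow_bound (w e : ℝ) (h1 : 1 ≤ w) (h2 : w ≤ 2) (he : -1 ≤ e) :
    w ^ e ≤ 2 ^ (e + 1) := by
  rcases le_total 0 e with h | h
  · calc w ^ e ≤ 2 ^ e := by gcongr
      _ ≤ _ := Real.rpow_le_rpow_of_exponent_le (by norm_num) (by linarith)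
  · calc w ^ e ≤ 1 := Real.rpow_le_one_of_one_le_of_nonpos h1 h
      _ ≤ _ := Real.one_le_rpow (by norm_num) (by linarith)

lemma PiMeasure_bound_pos (ν l p : ℝ) (hl : 0 < l) (hlν : l ≤ ν + 1 / 2) (hp : l < p) :
    ∃ C : ℝ, 0 < C ∧ ∀ D x : ℝ, 0 < D → 0 < x →
      ∫⁻ u, ENNReal.ofReal (1 / (D + (1 - u) * x) ^ p) ∂(PiMeasure ν) ≤
        ENNReal.ofReal (C * ((D + x) ^ (-l) * D ^ (-(p - l)))) := by
  have hν : ν ≠ -(1 / 2) := by intro h; linarith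
  set G : ℝ := Real.Gamma (ν + 1) / (Real.sqrt π * Real.Gamma (ν + 1 / 2)) with hG
  have hGpos : 0 < G := by
    have h1 : 0 < Real.Gamma (ν + 1) := Real.Gamma_pos_of_pos (by linarith)
    have h2 : 0 < Real.Gamma (ν + 1 / 2) := Real.Gamma_pos_of_pos (by linarith)
    have := Real.pi_pos
    positivity
  have hpl : 0 < p - l := by linarith
  set K : ℝ := G * 2 ^ (ν - 1 / 2 + 1) with hK
  have hKpos : 0 < K := by positivity
  refine ⟨2 * (K * (1 / l + 1 / (p - l))), by positivity, fun D x hD hx => ?_⟩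
  set F : ℝ → ENNReal := (Ioc (0:ℝ) 1).indicator
    (fun t => ENNReal.ofReal (t ^ (l - 1) * (1 / (D + t * x) ^ p))) with hF
  have hFm : Measurable F := by
    apply Measurable.indicator _ measurableSet_Ioc
    fun_prop
  have hFi : ∫⁻ t, F t ≤
      ENNReal.ofReal ((1 / l + 1 / (p - l)) * ((D + x) ^ (-l) * D ^ (-(p - l)))) := by
    rw [hF, lintegral_indicator measurableSet_Ioc]
    exact core_bound l p D x hl hp hD hx
  -- pointwise bound in the variable t
  have key : ∀ t w : ℝ, 0 < t → t ≤ 1 → 1 ≤ w → w ≤ 2 → ∀ s : ℝ, t ≤ s → 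
      ENNReal.ofReal (G * (t * w) ^ (ν - 1 / 2)) * ENNReal.ofReal (1 / (D + s * x) ^ p) ≤
        ENNReal.ofReal K * F t := by
    intro t w ht0 ht1 hw1 hw2 s hs
    rw [hF, indicator_of_mem (show t ∈ Ioc (0:ℝ) 1 from ⟨ht0, ht1⟩),
      ← ENNReal.ofReal_mul (by positivity), ← ENNReal.ofReal_mul (by positivity)]
    apply ENNReal.ofReal_le_ofReal
    have e1 : (t * w) ^ (ν - 1 / 2) ≤ t ^ (l - 1) * 2 ^ (ν - 1 / 2 + 1) := by
      rw [Real.mul_rpow ht0.le (by linarith)]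
      have a1 := one_add_rpow_bound w (ν - 1 / 2) hw1 hw2 (by linarith)
      have a2 : t ^ (ν - 1 / 2) ≤ t ^ (l - 1) :=
        Real.rpow_le_rpow_of_exponent_ge ht0 ht1 (by linarith)
      gcongr
    have e2 : 1 / (D + s * x) ^ p ≤ 1 / (D + t * x) ^ p := by
      have hpp : 0 ≤ p := by linarith
      gcongr
    calc G * (t * w) ^ (ν - 1 / 2) * (1 / (D + s * x) ^ p)
        ≤ G * (t ^ (l - 1) * 2 ^ (ν - 1 / 2 + 1)) * (1 / (D + t * x) ^ p) := by
          have : 0 < s := by linarith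
          gcongr
      _ = _ := by rw [hK]; ring
  rw [PiMeasure, if_neg hν, lintegral_withDensity_eq_lintegral_mul _ (by fun_prop) (by fun_prop)]
  have hIccIoo : (volume.restrict (Icc (-1:ℝ) 1)) = volume.restrict (Ioo (-1:ℝ) 1) :=
    Measure.restrict_congr_set Ioo_ae_eq_Icc.symm
  rw [hIccIoo]
  calc _ ≤ ∫⁻ u in Ioo (-1:ℝ) 1, (ENNReal.ofReal K * F (1 - u) + ENNReal.ofReal K * F (1 + u)) := by
        refine setLIntegral_mono' measurableSet_Ioo fun u hu => ?_
        have hu1 := hu.1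
        have hu2 := hu.2
        simp only [Pi.mul_apply]
        rcases le_total 0 u with h | h
        · refine le_trans ?_ le_self_add
          have := key (1 - u) (1 + u) (by linarith) (by linarith) (by linarith) (by linarith)
            (1 - u) le_rfl
          rw [show (1 - u) * (1 + u) = 1 - u ^ 2 by ring] at this
          exact this
        · refine le_trans ?_ le_add_self
          have := key (1 + u) (1 - u) (by linarith) (by linarith) (by linarith) (by linarith)
            (1 - u) (by linarith)
          rw [show (1 + u) * (1 - u) = 1 - u ^ 2 by ring] at this
          exact this
    _ ≤ ∫⁻ u, (ENNReal.ofReal K * F (1 - u) + ENNReal.ofReal K * F (1 + u)) :=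
        setLIntegral_le_lintegral _ _
    _ = ENNReal.ofReal K * (∫⁻ t, F t) + ENNReal.ofReal K * (∫⁻ t, F t) := by
        rw [lintegral_add_left (by fun_prop), lintegral_const_mul _ (by fun_prop),
          lintegral_const_mul _ (by fun_prop), lintegral_sub_left_eq_self F 1,
          lintegral_add_left_eq_self F 1]
    _ ≤ _ := by
        refine (add_le_add (mul_le_mul_right hFi _) (mul_le_mul_right hFi _)).trans ?_
        rw [← ENNReal.ofReal_mul hKpos.le, ← ENNReal.ofReal_add (by positivity) (by positivity)]
        apply ENNReal.ofReal_le_ofReal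
        apply le_of_eq; ring

lemma PiMeasure_bound (ν l p : ℝ) (hl : 0 ≤ l) (hlν : l ≤ ν + 1 / 2) (hp : l < p) :
    ∃ C : ℝ, 0 < C ∧ ∀ D x : ℝ, 0 < D → 0 < x →
      ∫⁻ u, ENNReal.ofReal (1 / (D + (1 - u) * x) ^ p) ∂(PiMeasure ν) ≤
        ENNReal.ofReal (C * ((D + x) ^ (-l) * D ^ (-(p - l)))) := by
  rcases hl.lt_or_eq with h | h
  · exact PiMeasure_bound_pos ν l p h hlν hp
  subst h
  by_cases hν : ν = -(1 / 2)
  · refine ⟨1, one_pos, fun D x hD hx => ?_⟩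
    rw [PiMeasure, if_pos hν, lintegral_smul_measure, lintegral_add_measure,
      lintegral_dirac, lintegral_dirac]
    have e1 : ENNReal.ofReal (1 / (D + (1 - (-1)) * x) ^ p) ≤ ENNReal.ofReal (D ^ (-p)) := by
      apply ENNReal.ofReal_le_ofReal
      rw [Real.rpow_neg hD.le, one_div]
      have : D ≤ D + (1 - (-1)) * x := by linarith
      gcongr
    have e2 : ENNReal.ofReal (1 / (D + (1 - 1) * x) ^ p) ≤ ENNReal.ofReal (D ^ (-p)) := by
      apply ENNReal.ofReal_le_ofReal
      rw [Real.rpow_neg hD.le, one_div]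
      simp
    simp only [neg_zero, Real.rpow_zero, one_mul, sub_zero]
    rw [smul_eq_mul]
    calc _ ≤ (2:ENNReal)⁻¹ * (ENNReal.ofReal (D ^ (-p)) + ENNReal.ofReal (D ^ (-p))) := by
          gcongr
      _ = ENNReal.ofReal (D ^ (-p)) := by
          rw [← two_mul, ← mul_assoc, ENNReal.inv_mul_cancel (by simp) (by simp), one_mul]
  · have hνpos : 0 < ν + 1 / 2 := by
      rcases hlν.lt_or_eq with h | h
      · exact h
      · exact absurd (by linarith) hν
    obtain ⟨C, hC, H⟩ := PiMeasure_bound_pos ν (min (ν + 1 / 2) (p / 2)) p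
      (lt_min hνpos (by linarith)) (min_le_left _ _)
      (lt_of_le_of_lt (min_le_right _ _) (by linarith))
    refine ⟨C, hC, fun D x hD hx => (H D x hD hx).trans (ENNReal.ofReal_le_ofReal ?_)⟩
    set m := min (ν + 1 / 2) (p / 2)
    have hm : 0 < m := lt_min hνpos (by linarith)
    have e : (D + x) ^ (-m) ≤ D ^ (-m) :=
      Real.rpow_le_rpow_of_nonpos hD (by linarith) (by linarith)
    simp only [neg_zero, Real.rpow_zero, one_mul, sub_zero]
    calc C * ((D + x) ^ (-m) * D ^ (-(p - m))) ≤ C * (D ^ (-m) * D ^ (-(p - m))) := by gcongr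
      _ = _ := by rw [← Real.rpow_add hD]; congr 2; ring

lemma PiMeasure_ae (ν : ℝ) : ∀ᵐ u ∂(PiMeasure ν), u ≤ 1 := by
  rw [PiMeasure]
  split_ifs with h
  · apply Measure.ae_smul_measure
    rw [ae_add_measure_iff, ae_dirac_iff measurableSet_Iic, ae_dirac_iff measurableSet_Iic]
    norm_num
  · apply (withDensity_absolutelyContinuous _ _).ae_le
    exact (ae_restrict_iff' measurableSet_Icc).2 (Filter.Eventually.of_forall fun t ht => ht.2)

/-- iterated estimate -/
lemma double_bound (ν₁ ν₂ l₁ l₂ P : ℝ) (hl₁ : 0 ≤ l₁) (hl₂ : 0 ≤ l₂)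
    (h₁ : l₁ ≤ ν₁ + 1 / 2) (h₂ : l₂ ≤ ν₂ + 1 / 2) (hP : P = l₁ + l₂ + 1) :
    ∃ C : ℝ, 0 < C ∧ ∀ d x y : ℝ, 0 < d → 0 < x → 0 < y →
      ∫⁻ u, ∫⁻ v, ENNReal.ofReal (1 / (d + (1 - u) * x + (1 - v) * y) ^ P)
          ∂(PiMeasure ν₂) ∂(PiMeasure ν₁) ≤
        ENNReal.ofReal (C * ((d + x) ^ (-l₁) * (d + y) ^ (-l₂) * d⁻¹)) := by
  obtain ⟨C₂, hC₂, H₂⟩ := PiMeasure_bound ν₂ l₂ P hl₂ h₂ (by linarith)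
  obtain ⟨C₁, hC₁, H₁⟩ := PiMeasure_bound ν₁ l₁ (P - l₂) hl₁ h₁ (by linarith)
  refine ⟨C₂ * C₁, by positivity, fun d x y hd hx hy => ?_⟩
  calc _ ≤ ∫⁻ u, ENNReal.ofReal (C₂ * (d + y) ^ (-l₂)) *
          ENNReal.ofReal (1 / (d + (1 - u) * x) ^ (P - l₂)) ∂(PiMeasure ν₁) := by
        refine lintegral_mono_ae ?_
        filter_upwards [PiMeasure_ae ν₁] with u hu
        have hux : 0 ≤ (1 - u) * x := mul_nonneg (by linarith) hx.le
        have hD : 0 < d + (1 - u) * x := by linarith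
        refine (H₂ _ y hD hy).trans ?_
        rw [← ENNReal.ofReal_mul (by positivity)]
        apply ENNReal.ofReal_le_ofReal
        rw [Real.rpow_neg hD.le (P - l₂), mul_assoc, one_div]
        have : (d + (1 - u) * x + y) ^ (-l₂) ≤ (d + y) ^ (-l₂) :=
          Real.rpow_le_rpow_of_nonpos (by linarith) (by linarith) (by linarith)
        gcongr
    _ = ENNReal.ofReal (C₂ * (d + y) ^ (-l₂)) *
          ∫⁻ u, ENNReal.ofReal (1 / (d + (1 - u) * x) ^ (P - l₂)) ∂(PiMeasure ν₁) :=
        lintegral_const_mul _ (by fun_prop)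
    _ ≤ ENNReal.ofReal (C₂ * (d + y) ^ (-l₂)) *
          ENNReal.ofReal (C₁ * ((d + x) ^ (-l₁) * d ^ (-(P - l₂ - l₁)))) := by
        gcongr
        exact H₁ d x hd hx
    _ ≤ _ := by
        rw [← ENNReal.ofReal_mul (by positivity)]
        apply ENNReal.ofReal_le_ofReal
        rw [show -(P - l₂ - l₁) = -1 by rw [hP]; ring, Real.rpow_neg_one]
        apply le_of_eq; ring

/-- the iterated estimate with the extra power `κ` -/
lemma double_bound_kappa (ν₁ ν₂ p₁ p₂ κ : ℝ) (hp₁ : 0 ≤ p₁) (hp₂ : 0 ≤ p₂) (hκ : 0 ≤ κ)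
    (h₁ : p₁ + κ ≤ ν₁ + 1 / 2) (h₂ : p₂ + κ ≤ ν₂ + 1 / 2) :
    ∃ C : ℝ, 0 < C ∧ ∀ d x y : ℝ, 0 < d → 0 < x → 0 < y → d + x + y = 1 →
      ∫⁻ u, ∫⁻ v, ENNReal.ofReal (1 / (d + (1 - u) * x + (1 - v) * y) ^ (p₁ + p₂ + 1 + κ))
          ∂(PiMeasure ν₂) ∂(PiMeasure ν₁) ≤
        ENNReal.ofReal (C * ((d + x) ^ (-p₁) * (d + y) ^ (-p₂) * d⁻¹)) := by
  obtain ⟨A, hA, HA⟩ := double_bound ν₁ ν₂ (p₁ + κ) p₂ (p₁ + p₂ + 1 + κ) (by linarith) hp₂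
    h₁ (by linarith) (by ring)
  obtain ⟨B, hB, HB⟩ := double_bound ν₁ ν₂ p₁ (p₂ + κ) (p₁ + p₂ + 1 + κ) hp₁ (by linarith)
    (by linarith) h₂ (by ring)
  have half : ∀ z : ℝ, 1 / 2 ≤ z → z ^ (-κ) ≤ 2 ^ κ := by
    intro z hz
    calc z ^ (-κ) ≤ (1 / 2 : ℝ) ^ (-κ) :=
          Real.rpow_le_rpow_of_nonpos (by norm_num) hz (by linarith)
      _ = _ := by rw [one_div, Real.inv_rpow (by norm_num), Real.rpow_neg (by norm_num), inv_inv]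
  refine ⟨(A + B) * 2 ^ κ, by positivity, fun d x y hd hx hy hs => ?_⟩
  by_cases hc : 1 / 2 ≤ d + x
  · refine (HA d x y hd hx hy).trans (ENNReal.ofReal_le_ofReal ?_)
    rw [neg_add, Real.rpow_add (by linarith)]
    have := half _ hc
    calc _ ≤ (A + B) * ((d + x) ^ (-p₁) * 2 ^ κ * (d + y) ^ (-p₂) * d⁻¹) := by
          gcongr; linarith
      _ = _ := by ring
  · refine (HB d x y hd hx hy).trans (ENNReal.ofReal_le_ofReal ?_)
    rw [neg_add, Real.rpow_add (by linarith)]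
    have := half (d + y) (by linarith)
    calc _ ≤ (A + B) * ((d + x) ^ (-p₁) * ((d + y) ^ (-p₂) * 2 ^ κ) * d⁻¹) := by
          gcongr; linarith
      _ = _ := by ring

/-- upper bound for the measure of a ball -/
lemma ball_bound (α β : ℝ) (hα : -(1 / 2) ≤ α) (hβ : -(1 / 2) ≤ β) (θ φ : ℝ)
    (hθ : θ ∈ Ioo (0:ℝ) π) (hφ : φ ∈ Ioo (0:ℝ) π) :
    jacobiMeasure α β (jacobiBall θ |θ - φ|) ≤
      ENNReal.ofReal ((π * (Real.sin (θ / 2) + Real.sin (φ / 2))) ^ (2 * α + 1) *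
        (π * (Real.cos (θ / 2) + Real.cos (φ / 2))) ^ (2 * β + 1) * (2 * |θ - φ|)) := by
  obtain ⟨ht0, ht1⟩ := hθ
  obtain ⟨hf0, hf1⟩ := hφ
  have hpi := Real.pi_pos
  have hsin : ∀ z : ℝ, 0 < z → z < π → z ≤ π * Real.sin (z / 2) := by
    intro z h0 h1
    have := Real.mul_le_sin (x := z / 2) (by linarith) (by linarith)
    rw [div_mul_div_comm, div_le_iff₀ (by positivity)] at this
    nlinarith
  have hcos : ∀ z : ℝ, 0 < z → z < π → π - z ≤ π * Real.cos (z / 2) := by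
    intro z h0 h1
    have := hsin (π - z) (by linarith) (by linarith)
    rwa [show (π - z) / 2 = π / 2 - z / 2 by ring, Real.sin_pi_div_two_sub] at this
  have hm : MeasurableSet (jacobiBall θ |θ - φ|) := measurableSet_Ioo.inter measurableSet_Ioo
  have a1 := hsin θ ht0 ht1
  have a2 := hsin φ hf0 hf1
  have a3 := hcos θ ht0 ht1
  have a4 := hcos φ hf0 hf1
  have p1 : 0 < π * (Real.sin (θ / 2) + Real.sin (φ / 2)) := by linarith
  have p2 : 0 < π * (Real.cos (θ / 2) + Real.cos (φ / 2)) := by linarith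
  rw [jacobiMeasure, withDensity_apply _ hm, Measure.restrict_restrict hm]
  have hsub : jacobiBall θ |θ - φ| ∩ Ioo 0 π ⊆ Ioo (θ - |θ - φ|) (θ + |θ - φ|) :=
    fun z hz => hz.1.1
  calc _ ≤ ∫⁻ _ in jacobiBall θ |θ - φ| ∩ Ioo 0 π,
          ENNReal.ofReal ((π * (Real.sin (θ / 2) + Real.sin (φ / 2))) ^ (2 * α + 1) *
            (π * (Real.cos (θ / 2) + Real.cos (φ / 2))) ^ (2 * β + 1)) := by
        refine setLIntegral_mono' (hm.inter measurableSet_Ioo) fun z hz => ?_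
        obtain ⟨⟨⟨hz1, hz2⟩, -⟩, hz3, hz4⟩ := hz
        have b1 : 0 ≤ Real.sin (z / 2) :=
          Real.sin_nonneg_of_nonneg_of_le_pi (by linarith) (by linarith)
        have b2 : 0 ≤ Real.cos (z / 2) :=
          Real.cos_nonneg_of_mem_Icc ⟨by linarith, by linarith⟩
        have b3 : Real.sin (z / 2) ≤ π * (Real.sin (θ / 2) + Real.sin (φ / 2)) := by
          have : Real.sin (z / 2) ≤ z / 2 := Real.sin_le (by linarith)
          rcases abs_cases (θ - φ) with h | h <;> linarith
        have b4 : Real.cos (z / 2) ≤ π * (Real.cos (θ / 2) + Real.cos (φ / 2)) := by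
          have : Real.cos (z / 2) ≤ (π - z) / 2 := by
            rw [← Real.sin_pi_div_two_sub, show π / 2 - z / 2 = (π - z) / 2 by ring]
            exact Real.sin_le (by linarith)
          rcases abs_cases (θ - φ) with h | h <;> linarith
        apply ENNReal.ofReal_le_ofReal
        have c1 : 0 ≤ 2 * α + 1 := by linarith
        have c2 : 0 ≤ 2 * β + 1 := by linarith
        gcongr
    _ ≤ _ := by
        rw [setLIntegral_const, ENNReal.ofReal_mul (q := 2 * |θ - φ|) (by positivity)]
        gcongr
        refine (measure_mono hsub).trans ?_
        rw [Real.volume_Ioo]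
        apply ENNReal.ofReal_le_ofReal
        linarith

lemma final_algebra (a b e₁ e₂ X₁ X₂ X₃ Y₁ Y₂ Y₃ m₁ m₂ m₃ m₄ C r d z : ℝ)
    (ha : 0 ≤ a) (hb : 0 ≤ b) (he₁ : 0 ≤ e₁) (he₂ : 0 ≤ e₂)
    (hX₁ : 0 ≤ X₁) (hX₂ : 0 ≤ X₂) (hY₁ : 0 ≤ Y₁) (hY₂ : 0 ≤ Y₂)
    (hm₁ : 0 ≤ m₁) (hm₂ : 0 ≤ m₂) (hm₃ : 0 ≤ m₃) (hm₄ : 0 ≤ m₄)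
    (hC : 0 ≤ C) (hr : 0 ≤ r) (hd : 0 < d)
    (g1 : a ≤ m₁ * X₁) (g2 : b ≤ m₂ * Y₁) (g3 : e₁ ≤ m₃ * X₃) (g4 : e₂ ≤ m₄ * Y₃)
    (x1 : X₁ * X₂ * X₃ = 1) (y1 : Y₁ * Y₂ * Y₃ = 1) (hr2 : r ^ 2 * d⁻¹ ≤ 2 * z ^ 2) :
    a * b * (C * (X₂ * Y₂ * d⁻¹)) * (r * (e₁ * e₂ * (2 * r))) ≤
      m₁ * m₂ * C * (m₃ * m₄ * (4 * z ^ 2)) := by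
  calc _ ≤ (m₁ * X₁) * (m₂ * Y₁) * (C * (X₂ * Y₂ * d⁻¹)) *
        (r * ((m₃ * X₃) * (m₄ * Y₃) * (2 * r))) := by
        have : 0 ≤ m₃ * X₃ := he₁.trans g3
        gcongr
    _ = m₁ * m₂ * C * (m₃ * m₄ * (2 * (r ^ 2 * d⁻¹))) * (X₁ * X₂ * X₃) * (Y₁ * Y₂ * Y₃) := by ring
    _ ≤ _ := by
        rw [x1, y1, mul_one, mul_one]
        have h4 : 2 * (r ^ 2 * d⁻¹) ≤ 4 * z ^ 2 := by linarith
        exact mul_le_mul_of_nonneg_left (mul_le_mul_of_nonneg_left h4 (by positivity))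
          (by positivity)

set_option maxHeartbeats 1600000

/-- second estimate of the generalized Lemma 4.3 (Lemma `L4.3*`). -/
theorem generalized_double_integral_q_bound_two (α β γ₁ γ₂ κ κ₁ κ₂ : ℝ)
    (hα : -(1 / 2) ≤ α) (hβ : -(1 / 2) ≤ β)
    (hγ₁ : 0 ≤ γ₁) (hγ₂ : 0 ≤ γ₂) (hκ : 0 ≤ κ) (hκ₁ : 0 ≤ κ₁) (hκ₂ : 0 ≤ κ₂) :
    ∃ C : ℝ, 0 < C ∧
      ∀ θ ∈ Ioo (0 : ℝ) π, ∀ φ ∈ Ioo (0 : ℝ) π, θ ≠ φ →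
        ENNReal.ofReal
            ((Real.sin (θ / 2) + Real.sin (φ / 2)) ^ (2 * γ₁) *
              (Real.cos (θ / 2) + Real.cos (φ / 2)) ^ (2 * γ₂)) *
          (∫⁻ u, ∫⁻ v,
              ENNReal.ofReal (1 / qfun θ φ u v ^ (α + β + 2 + γ₁ + γ₂ + κ))
            ∂(PiMeasure (β + γ₂ + κ + κ₂)) ∂(PiMeasure (α + γ₁ + κ + κ₁)))
          ≤ ENNReal.ofReal C /
              (ENNReal.ofReal |θ - φ| * jacobiMeasure α β (jacobiBall θ |θ - φ|)) := by
  obtain ⟨C, hC, H⟩ := double_bound_kappa (α + γ₁ + κ + κ₁) (β + γ₂ + κ + κ₂)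
    (α + γ₁ + 1 / 2) (β + γ₂ + 1 / 2) κ (by linarith) (by linarith) hκ (by linarith) (by linarith)
  have hpi := Real.pi_pos
  refine ⟨4 ^ γ₁ * 4 ^ γ₂ * C * ((4 * π ^ 2) ^ (α + 1 / 2) * (4 * π ^ 2) ^ (β + 1 / 2) *
    (4 * π ^ 2)), by positivity, fun θ hθ φ hφ hne => ?_⟩
  have hball := ball_bound α β hα hβ θ φ hθ hφ
  obtain ⟨ht0, ht1⟩ := hθ
  obtain ⟨hf0, hf1⟩ := hφ
  have hs : 0 < Real.sin (θ / 2) := Real.sin_pos_of_pos_of_lt_pi (by linarith) (by linarith)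
  have hS : 0 < Real.sin (φ / 2) := Real.sin_pos_of_pos_of_lt_pi (by linarith) (by linarith)
  have hc : 0 < Real.cos (θ / 2) := Real.cos_pos_of_mem_Ioo ⟨by linarith, by linarith⟩
  have hK : 0 < Real.cos (φ / 2) := Real.cos_pos_of_mem_Ioo ⟨by linarith, by linarith⟩
  have hcs1 := Real.sin_sq_add_cos_sq (θ / 2)
  have hcs2 := Real.sin_sq_add_cos_sq (φ / 2)
  have hr : 0 < |θ - φ| := abs_pos.2 (sub_ne_zero.2 hne)
  have hd0 : |θ - φ| ^ 2 ≤ 2 * π ^ 2 *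
      (1 - Real.sin (θ / 2) * Real.sin (φ / 2) - Real.cos (θ / 2) * Real.cos (φ / 2)) := by
    have h := Real.cos_le_one_sub_mul_cos_sq (x := θ / 2 - φ / 2)
      (by rw [abs_le]; constructor <;> linarith)
    rw [Real.cos_sub] at h
    have h2 : 2 / π ^ 2 * (θ / 2 - φ / 2) ^ 2 ≤
      (1 - Real.sin (θ / 2) * Real.sin (φ / 2) - Real.cos (θ / 2) * Real.cos (φ / 2)) := by
      linarith
    rw [div_mul_eq_mul_div, div_le_iff₀ (by positivity)] at h2
    rw [sq_abs]
    nlinarith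
  simp only [qfun]
  generalize Real.sin (θ / 2) = s at *
  generalize Real.sin (φ / 2) = S at *
  generalize Real.cos (θ / 2) = c at *
  generalize Real.cos (φ / 2) = k at *
  generalize |θ - φ| = r at *
  set d : ℝ := 1 - s * S - c * k with hd
  have hdpos : 0 < d := by
    by_contra h
    push Not at h
    nlinarith [sq_pos_of_pos hr, sq_pos_of_pos hpi]
  have hx : 0 < s * S := by positivity
  have hy : 0 < c * k := by positivity
  have hI := H d (s * S) (c * k) hdpos hx hy (by rw [hd]; ring)
  have heq : ∀ u v : ℝ, 1 - u * s * S - v * c * k = d + (1 - u) * (s * S) + (1 - v) * (c * k) := by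
    intro u v; rw [hd]; ring
  simp only [heq, show α + β + 2 + γ₁ + γ₂ + κ = α + γ₁ + 1 / 2 + (β + γ₂ + 1 / 2) + 1 + κ by ring]
  set X : ℝ := d + s * S with hX
  set Y : ℝ := d + c * k with hY
  have hXp : 0 < X := by positivity
  have hYp : 0 < Y := by positivity
  have hA : (s + S) ^ 2 ≤ 4 * X := by nlinarith [sq_nonneg (c - k), sq_nonneg (s - S)]
  have hB : (c + k) ^ 2 ≤ 4 * Y := by nlinarith [sq_nonneg (c - k), sq_nonneg (s - S)]
  have hpow : ∀ z w e : ℝ, 0 < z → z ^ 2 ≤ w → 0 ≤ e → z ^ (2 * e) ≤ w ^ e := by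
    intro z w e hz hzw he
    rw [Real.rpow_mul hz.le, Real.rpow_two]
    gcongr
  have g1 : (s + S) ^ (2 * γ₁) ≤ 4 ^ γ₁ * X ^ γ₁ := by
    rw [← Real.mul_rpow (by norm_num) hXp.le]
    exact hpow _ _ _ (by positivity) hA hγ₁
  have g2 : (c + k) ^ (2 * γ₂) ≤ 4 ^ γ₂ * Y ^ γ₂ := by
    rw [← Real.mul_rpow (by norm_num) hYp.le]
    exact hpow _ _ _ (by positivity) hB hγ₂
  have g3 : (π * (s + S)) ^ (2 * α + 1) ≤ (4 * π ^ 2) ^ (α + 1 / 2) * X ^ (α + 1 / 2) := by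
    rw [← Real.mul_rpow (by positivity) hXp.le, show 2 * α + 1 = 2 * (α + 1 / 2) by ring]
    exact hpow _ _ _ (by positivity) (by nlinarith [sq_pos_of_pos hpi]) (by linarith)
  have g4 : (π * (c + k)) ^ (2 * β + 1) ≤ (4 * π ^ 2) ^ (β + 1 / 2) * Y ^ (β + 1 / 2) := by
    rw [← Real.mul_rpow (by positivity) hYp.le, show 2 * β + 1 = 2 * (β + 1 / 2) by ring]
    exact hpow _ _ _ (by positivity) (by nlinarith [sq_pos_of_pos hpi]) (by linarith)
  rw [ENNReal.le_div_iff_mul_le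
    (Or.inr (ENNReal.ofReal_pos.2 (by positivity)).ne') (Or.inr ENNReal.ofReal_ne_top)]
  refine (mul_le_mul' (mul_le_mul' le_rfl hI) (mul_le_mul' le_rfl hball)).trans ?_
  rw [← ENNReal.ofReal_mul (by positivity), ← ENNReal.ofReal_mul (by positivity),
    ← ENNReal.ofReal_mul (by positivity)]
  apply ENNReal.ofReal_le_ofReal
  have x1 : X ^ γ₁ * X ^ (-(α + γ₁ + 1 / 2)) * X ^ (α + 1 / 2) = 1 := by
    rw [← Real.rpow_add hXp, ← Real.rpow_add hXp]
    ring_nf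
    exact Real.rpow_zero _
  have y1 : Y ^ γ₂ * Y ^ (-(β + γ₂ + 1 / 2)) * Y ^ (β + 1 / 2) = 1 := by
    rw [← Real.rpow_add hYp, ← Real.rpow_add hYp]
    ring_nf
    exact Real.rpow_zero _
  have hr2 : r ^ 2 * d⁻¹ ≤ 2 * π ^ 2 := by
    rw [← div_eq_mul_inv, div_le_iff₀ hdpos]; exact hd0
  have ha0 : 0 ≤ (s + S) ^ (2 * γ₁) := by positivity
  have hb0 : 0 ≤ (c + k) ^ (2 * γ₂) := by positivity
  have hc0 : 0 ≤ (π * (s + S)) ^ (2 * α + 1) := by positivity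
  have hd0 : 0 ≤ (π * (c + k)) ^ (2 * β + 1) := by positivity
  exact final_algebra _ _ _ _ _ _ _ _ _ _ _ _ _ _ C r d π ha0 hb0 hc0 hd0 (by positivity)
    (by positivity) (by positivity) (by positivity) (by positivity) (by positivity) (by positivity)
    (by positivity) hC.le hr.le hdpos g1 g2 g3 g4 x1 y1 hr2
end

section
/- Let α, β ≥ -1/2. There exists a constant C depending only on α and β such that for all θ, θ', φ ∈ (0,π) with |θ-φ| > 2|θ-θ'| one has sup_{t>0} |H̃_t^{α,β}(θ,φ) - H̃_t^{α,β}(θ',φ)| ≤ C (|θ-θ'| / |θ-φ|) · 1/μ_{α,β}^+(B(θ, |θ-φ|)). -/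
open MeasureTheory Real Set

lemma qfun_low (θ φ u v : ℝ) (hθ : θ ∈ Ioo (0:ℝ) π) (hφ : φ ∈ Ioo (0:ℝ) π) :
    (θ - φ)^2 / 20 + (1 - u) * (sin (θ/2) * sin (φ/2)) + (1 - v) * (cos (θ/2) * cos (φ/2))
      ≤ qfun θ φ u v := by
  have h1 : cos ((θ-φ)/2) ≤ 1 - 2 / π^2 * ((θ-φ)/2)^2 := by
    apply Real.cos_le_one_sub_mul_cos_sq
    rw [abs_le]; constructor <;> linarith [hθ.1, hθ.2, hφ.1, hφ.2]
  have h2 : cos ((θ-φ)/2) = cos (θ/2) * cos (φ/2) + sin (θ/2) * sin (φ/2) := by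
    rw [sub_div, cos_sub]
  have h3 : (θ-φ)^2 / 20 ≤ 2 / π^2 * ((θ-φ)/2)^2 := by
    have hpi : π^2 ≤ 10 := by nlinarith [Real.pi_lt_d2, Real.pi_pos]
    have : 2 / π^2 * ((θ-φ)/2)^2 = (θ-φ)^2 / (2 * π^2) := by field_simp
    rw [this]
    apply div_le_div_of_nonneg_left (by positivity) (by positivity) (by linarith)
  unfold qfun
  nlinarith

lemma G_sq (θ φ u v : ℝ) (hu : |u| ≤ 1) (hv : |v| ≤ 1) :
    (u * cos (θ/2) * sin (φ/2) - v * sin (θ/2) * cos (φ/2))^2 ≤ 2 * qfun θ φ u v := by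
  have e1 := sin_sq_add_cos_sq (θ/2)
  have e2 := sin_sq_add_cos_sq (φ/2)
  have hu2 : u^2 ≤ 1 := by rw [← sq_abs]; nlinarith [abs_nonneg u]
  have hv2 : v^2 ≤ 1 := by rw [← sq_abs]; nlinarith [abs_nonneg v]
  unfold qfun
  set s := sin (θ/2); set c := cos (θ/2); set s' := sin (φ/2); set c' := cos (φ/2)
  have key : (u * c * s' - v * s * c')^2 + (u * s * s' + v * c * c')^2
      = (u^2 * s'^2 + v^2 * c'^2) * (s^2 + c^2) := by ring
  rw [e1] at key
  nlinarith [sq_nonneg (1 - u * s * s' - v * c * c'), sq_nonneg s', sq_nonneg c',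
    mul_le_mul_of_nonneg_right hu2 (sq_nonneg s'), mul_le_mul_of_nonneg_right hv2 (sq_nonneg c')]

lemma qfun_nonneg (θ φ u v : ℝ) (hu : |u| ≤ 1) (hv : |v| ≤ 1) : 0 ≤ qfun θ φ u v := by
  have := G_sq θ φ u v hu hv
  nlinarith [sq_nonneg (u * cos (θ/2) * sin (φ/2) - v * sin (θ/2) * cos (φ/2))]

lemma qfun_le (θ φ u v : ℝ) (hu : |u| ≤ 1) (hv : |v| ≤ 1) : qfun θ φ u v ≤ 2 := by
  have h := qfun_nonneg θ φ (-u) (-v) (by simpa) (by simpa)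
  unfold qfun at *
  linarith

lemma qfun_comp (θ θ' φ u v : ℝ) (hu : |u| ≤ 1) (hv : |v| ≤ 1) :
    qfun θ φ u v ≤ 2 * qfun θ' φ u v + (θ - θ')^2 / 4 := by
  have hG := G_sq θ' φ u v hu hv
  have hq := qfun_nonneg θ' φ u v hu hv
  obtain ⟨d, rfl⟩ : ∃ d, θ = θ' + d := ⟨θ - θ', by ring⟩
  have es : sin ((θ' + d)/2) = sin (θ'/2) * cos (d/2) + cos (θ'/2) * sin (d/2) := by
    rw [add_div, sin_add]
  have ec : cos ((θ' + d)/2) = cos (θ'/2) * cos (d/2) - sin (θ'/2) * sin (d/2) := by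
    rw [add_div, cos_add]
  set G := u * cos (θ'/2) * sin (φ/2) - v * sin (θ'/2) * cos (φ/2) with hGd
  have e : qfun (θ' + d) φ u v = 1 - cos (d/2) + cos (d/2) * qfun θ' φ u v - sin (d/2) * G := by
    unfold qfun; rw [es, ec, hGd]; ring
  have h1 := Real.one_sub_sq_div_two_le_cos (x := d/2)
  have h2 := Real.cos_le_one (d/2)
  have h3 : sin (d/2)^2 ≤ (d/2)^2 := by
    rw [← sq_abs, ← sq_abs (d/2)]
    exact pow_le_pow_left₀ (abs_nonneg _) Real.abs_sin_le_abs 2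
  rw [e]
  have : θ' + d - θ' = d := by ring
  rw [this]
  nlinarith [sq_nonneg (sin (d/2) + G), mul_nonneg hq (sub_nonneg.2 h2)]

lemma int1 (R B : ℝ) (hR : 0 < R) (hB : 0 ≤ B) :
    IntervalIntegrable (fun v : ℝ => B / (R + (1 - v) * B)^2) volume (-1) 1 ∧
    ∫ v in (-1:ℝ)..1, B / (R + (1 - v) * B)^2 ≤ 1 / R := by
  have hpos : ∀ v ∈ uIcc (-1:ℝ) 1, 0 < R + (1 - v) * B := by
    intro v hv
    rw [uIcc_of_le (by norm_num)] at hv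
    nlinarith [hv.2]
  have hI : IntervalIntegrable (fun v : ℝ => B / (R + (1 - v) * B)^2) volume (-1) 1 := by
    apply ContinuousOn.intervalIntegrable
    apply ContinuousOn.div (by fun_prop) (by fun_prop)
    intro v hv; exact (pow_pos (hpos v hv) 2).ne'
  refine ⟨hI, ?_⟩
  have := intervalIntegral.integral_eq_sub_of_hasDerivAt
    (f := fun v : ℝ => 1 / (R + (1 - v) * B)) (f' := fun v : ℝ => B / (R + (1 - v) * B)^2)
    (a := -1) (b := 1) (fun v hv => by
      have h0 := hpos v hv
      have h1 : HasDerivAt (fun v : ℝ => R + (1 - v) * B) (-B) v := by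
        have := (((hasDerivAt_id v).const_sub 1).mul_const B).const_add R
        simpa using this
      have := h1.fun_inv h0.ne'
      simpa [one_div] using this) hI
  rw [this]
  have : 0 ≤ 1 / (R + (1 - (-1)) * B) := by positivity
  simp at this ⊢
  linarith

lemma int2 :
    IntervalIntegrable (fun v : ℝ => (1 - v) ^ (-(1/2) : ℝ)) volume (-1) 1 ∧
    ∫ v in (-1:ℝ)..1, (1 - v) ^ (-(1/2) : ℝ) ≤ 3 := by
  constructor
  · have := (intervalIntegral.intervalIntegrable_rpow' (a := 2) (b := 0) (r := -(1/2)) (by norm_num)).comp_sub_left 1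
    norm_num at this ⊢
    exact this
  · rw [intervalIntegral.integral_comp_sub_left (fun x => x ^ (-(1/2) : ℝ)) 1,
      integral_rpow (Or.inl (by norm_num))]
    norm_num
    rw [← Real.sqrt_eq_rpow]
    nlinarith [Real.sq_sqrt (show (0:ℝ) ≤ 2 by norm_num), Real.sqrt_nonneg 2]

lemma dbl_bound (A B ρ M : ℝ) (hA : 0 ≤ A) (hB : 0 ≤ B) (hρ : 0 < ρ) (hM : 0 ≤ M)
    (f : ℝ → ℝ → ℝ)
    (hf : ∀ u ∈ Ioo (-1:ℝ) 1, ∀ v ∈ Ioo (-1:ℝ) 1, |f u v| ≤ M *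
      (A * B / (ρ + (1-u) * A + (1-v) * B)^3
        + B * (1-u)^(-(1/2):ℝ) / (ρ + (1-u) * A + (1-v) * B)^2
        + A * (1-v)^(-(1/2):ℝ) / (ρ + (1-u) * A + (1-v) * B)^2
        + (1-u)^(-(1/2):ℝ) * (1-v)^(-(1/2):ℝ) / (ρ + (1-u) * A + (1-v) * B))) :
    |∫ u in (-1:ℝ)..1, ∫ v in (-1:ℝ)..1, f u v| ≤ 16 * M / ρ := by
  have hne : ∀ᵐ v : ℝ, v ≠ 1 := by simp [ae_iff]
  have inner : ∀ u ∈ Ioo (-1:ℝ) 1, |∫ v in (-1:ℝ)..1, f u v| ≤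
      4 * M * (A / (ρ + (1-u) * A)^2 + 1 / ρ * (1-u)^(-(1/2):ℝ)) := by
    intro u hu
    have hx : 0 < 1 - u := by linarith [hu.2]
    set X := (1-u)^(-(1/2):ℝ) with hX
    have hX0 : 0 ≤ X := Real.rpow_nonneg hx.le _
    set R := ρ + (1-u) * A with hR
    have hρR : ρ ≤ R := by nlinarith
    have hR0 : 0 < R := by linarith
    obtain ⟨i1, l1⟩ := int1 R B hR0 hB
    obtain ⟨i2, l2⟩ := int2
    have hI1 := i1.const_mul (M * (A / R + X))
    have hI2 := i2.const_mul (M * (A / R^2 + X / ρ))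
    have := intervalIntegral.norm_integral_le_of_norm_le (f := fun v => f u v) (a := -1) (b := 1)
      (g := fun v => M * (A / R + X) * (B / (R + (1-v) * B)^2)
        + M * (A / R^2 + X / ρ) * (1-v)^(-(1/2):ℝ)) (μ := volume) (by norm_num) (by
        filter_upwards [hne] with v hv hv2
        have hv1 : v < 1 := lt_of_le_of_ne hv2.2 hv
        rw [Real.norm_eq_abs]
        refine (hf u hu v ⟨hv2.1, hv1⟩).trans ?_
        have hy : 0 < 1 - v := by linarith
        set Y := (1-v)^(-(1/2):ℝ) with hY
        have hY0 : 0 ≤ Y := Real.rpow_nonneg hy.le _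
        set Q := R + (1-v) * B with hQ
        have hRQ : R ≤ Q := by nlinarith
        have hQ0 : 0 < Q := by linarith
        have e1 : A * B / Q^3 ≤ A / R * (B / Q^2) := by
          rw [div_mul_div_comm]
          apply div_le_div_of_nonneg_left (by positivity) (by positivity)
          nlinarith [pow_pos hQ0 2]
        have e2 : A * Y / Q^2 ≤ A / R^2 * Y := by
          rw [div_mul_eq_mul_div]
          apply div_le_div_of_nonneg_left (by positivity) (by positivity)
          exact pow_le_pow_left₀ hR0.le hRQ 2
        have e3 : X * Y / Q ≤ X / ρ * Y := by
          rw [div_mul_eq_mul_div]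
          apply div_le_div_of_nonneg_left (by positivity) (by positivity)
          linarith
        calc M * (A * B / Q ^ 3 + B * X / Q ^ 2 + A * Y / Q ^ 2 + X * Y / Q)
            ≤ M * (A / R * (B / Q^2) + B * X / Q^2 + A / R^2 * Y + X / ρ * Y) := by gcongr
          _ = _ := by ring) (hI1.add hI2)
    rw [Real.norm_eq_abs] at this
    refine this.trans ?_
    rw [intervalIntegral.integral_add hI1 hI2, intervalIntegral.integral_const_mul,
      intervalIntegral.integral_const_mul]
    calc _ ≤ M * (A / R + X) * (1 / R) + M * (A / R^2 + X / ρ) * 3 := by gcongr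
      _ = M * (A / R^2 + X * (1 / R) + 3 * (A / R^2 + X / ρ)) := by field_simp
      _ ≤ M * (A / R^2 + X * (1 / ρ) + 3 * (A / R^2 + X / ρ)) := by gcongr
      _ = _ := by ring
  obtain ⟨i1, l1⟩ := int1 ρ A hρ hA
  obtain ⟨i2, l2⟩ := int2
  have hI1 := i1.const_mul (4 * M)
  have hI2 := i2.const_mul (4 * M * (1 / ρ))
  have := intervalIntegral.norm_integral_le_of_norm_le (f := fun u => ∫ v in (-1:ℝ)..1, f u v)
      (a := -1) (b := 1)
      (g := fun u => 4 * M * (A / (ρ + (1-u) * A)^2) + 4 * M * (1 / ρ) * (1-u)^(-(1/2):ℝ))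
      (μ := volume) (by norm_num) (by
        filter_upwards [hne] with u hu hu2
        have hu1 : u < 1 := lt_of_le_of_ne hu2.2 hu
        rw [Real.norm_eq_abs]
        refine (inner u ⟨hu2.1, hu1⟩).trans (le_of_eq ?_)
        ring) (hI1.add hI2)
  rw [Real.norm_eq_abs] at this
  refine this.trans ?_
  rw [intervalIntegral.integral_add hI1 hI2, intervalIntegral.integral_const_mul,
      intervalIntegral.integral_const_mul]
  calc _ ≤ 4 * M * (1 / ρ) + 4 * M * (1 / ρ) * 3 := by gcongr
    _ = _ := by ring

lemma tkill (t q M : ℝ) (ht : 0 < t) (hq : 0 < q) (hq2 : q ≤ 2) (hM : 1 ≤ M) :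
    sinh (t/2) * (cosh (t/2) - 1 + q)^(-M) ≤ 2 * q^(1/2 - M) := by
  have hc := Real.one_le_cosh (t/2)
  have hs : 0 ≤ sinh (t/2) := (Real.sinh_pos_iff.2 (by linarith)).le
  have hsq := Real.cosh_sq (t/2)
  set P := cosh (t/2) - 1 + q with hP
  have hqP : q ≤ P := by linarith
  have hP0 : 0 < P := by linarith
  have h1 : sinh (t/2) ≤ 2 * P / √q := by
    rw [le_div_iff₀ (Real.sqrt_pos.2 hq)]
    apply le_of_sq_le_sq _ (by positivity)
    rw [mul_pow, Real.sq_sqrt hq.le]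
    nlinarith [mul_nonneg (sub_nonneg.2 hc) hq.le, sq_nonneg (cosh (t/2) - 1), mul_nonneg (sq_nonneg (cosh (t/2) - 1)) (sub_nonneg.2 hq2)]
  have h2 : P^(-M) = P⁻¹ * P^(1-M) := by
    rw [← Real.rpow_neg_one, ← Real.rpow_add hP0]; congr 1; ring
  have h3 : P^(1-M) ≤ q^(1-M) := Real.rpow_le_rpow_of_nonpos hq hqP (by linarith)
  have h4 : q^(1/2-M) = (√q)⁻¹ * q^(1-M) := by
    rw [Real.sqrt_eq_rpow, ← Real.rpow_neg hq.le, ← Real.rpow_add hq]; congr 1; ring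
  rw [h2, h4]
  calc _ ≤ 2 * P / √q * (P⁻¹ * q^(1-M)) := by gcongr
    _ = _ := by field_simp

set_option maxHeartbeats 1600000 in
lemma pt1 (N t θ θ' φ u v : ℝ) (hN : 1 ≤ N) (ht : 0 < t) (hθ : θ ∈ Ioo (0:ℝ) π)
    (hθ' : θ' ∈ Ioo (0:ℝ) π) (hφ : φ ∈ Ioo (0:ℝ) π) (hr : 2 * |θ - θ'| < |θ - φ|)
    (hu : |u| ≤ 1) (hv : |v| ≤ 1) :
    sinh (t/2) * |sin (θ/2) * sin (φ/2) * (cos (θ/2) * cos (φ/2))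
          * (cosh (t/2) - 1 + qfun θ φ u v)^(-N)
        - sin (θ'/2) * sin (φ/2) * (cos (θ'/2) * cos (φ/2))
          * (cosh (t/2) - 1 + qfun θ' φ u v)^(-N)|
      ≤ 2 * 7^N * (4 * N + 4) * |θ - θ'| * (qfun θ φ u v)^(-N) *
        (sin (θ/2) * sin (φ/2) * (cos (θ/2) * cos (φ/2)) +
          √(qfun θ φ u v) * (sin (φ/2) * (cos (θ/2) * cos (φ/2))
            + cos (φ/2) * (sin (θ/2) * sin (φ/2)))
          + sin (φ/2) * cos (φ/2) * qfun θ φ u v) := by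
  set q := qfun θ φ u v with hq
  set s' := sin (φ/2) with hs'
  set c' := cos (φ/2) with hc'
  have hsp0 : 0 ≤ s' := sin_nonneg_of_nonneg_of_le_pi (by linarith [hφ.1]) (by linarith [hφ.2, hφ.1])
  have hcp0 : 0 ≤ c' := cos_nonneg_of_neg_pi_div_two_le_of_le (by linarith [hφ.1, hφ.2]) (by linarith [hφ.2])
  set A := sin (θ/2) * s' with hA
  set B := cos (θ/2) * c' with hB
  have hA0 : 0 ≤ A := mul_nonneg (sin_nonneg_of_nonneg_of_le_pi (by linarith [hθ.1]) (by linarith [hθ.2, hθ.1])) hsp0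
  have hB0 : 0 ≤ B := mul_nonneg (cos_nonneg_of_neg_pi_div_two_le_of_le (by linarith [hθ.1, hθ.2]) (by linarith [hθ.2])) hcp0
  have hsinh : 0 < sinh (t/2) := Real.sinh_pos_iff.2 (by linarith)
  have hcosh := Real.one_le_cosh (t/2)
  have lowall : ∀ z ∈ Ioo (0:ℝ) π, (z - φ)^2/20 ≤ qfun z φ u v := by
    intro z hz
    have h := qfun_low z φ u v hz hφ
    have h1 : 0 ≤ (1-u) * (sin (z/2) * sin (φ/2)) := mul_nonneg (by linarith [(abs_le.1 hu).2])
      (mul_nonneg (sin_nonneg_of_nonneg_of_le_pi (by linarith [hz.1]) (by linarith [hz.2, hz.1])) hsp0)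
    have h2 : 0 ≤ (1-v) * (cos (z/2) * cos (φ/2)) := mul_nonneg (by linarith [(abs_le.1 hv).2])
      (mul_nonneg (cos_nonneg_of_neg_pi_div_two_le_of_le (by linarith [hz.1, hz.2]) (by linarith [hz.2])) hcp0)
    linarith
  set r := |θ - φ| with hrd
  have hr0 : 0 < r := by linarith [abs_nonneg (θ - θ')]
  have hrq : r^2 ≤ 20 * q := by
    have := lowall θ hθ
    rw [hrd, sq_abs]; linarith
  have hq0 : 0 < q := by nlinarith [pow_pos hr0 2]
  have hrq' : r ≤ 8 * √q := by
    apply le_of_sq_le_sq _ (by positivity)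
    rw [mul_pow, Real.sq_sqrt hq0.le]; nlinarith
  -- facts on the segment
  have seg : ∀ z ∈ uIcc θ θ', z ∈ Ioo (0:ℝ) π ∧ |θ - z| ≤ r / 2 := by
    intro z hz
    have h1 : |z - θ| ≤ |θ' - θ| := Set.abs_sub_left_of_mem_uIcc hz
    rw [abs_sub_comm z, abs_sub_comm θ'] at h1
    refine ⟨?_, by linarith⟩
    rw [mem_uIcc] at hz
    rcases hz with hz | hz
    · exact ⟨by linarith [hθ.1], by linarith [hθ'.2]⟩
    · exact ⟨by linarith [hθ'.1], by linarith [hθ.2]⟩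
  have key : ∀ z ∈ uIcc θ θ', q / 7 ≤ qfun z φ u v := by
    intro z hz
    obtain ⟨hz1, hz2⟩ := seg z hz
    have h1 := qfun_comp θ z φ u v hu hv
    have h2 := lowall z hz1
    have h3 : r / 2 ≤ |z - φ| := by
      have := abs_sub_le θ z φ
      linarith
    have h4 : (r/2)^2 ≤ (z - φ)^2 := by
      rw [← sq_abs (z - φ)]; exact pow_le_pow_left₀ (by linarith) h3 2
    have h5 : (θ - z)^2 ≤ (r/2)^2 := by
      rw [← sq_abs (θ - z)]; exact pow_le_pow_left₀ (abs_nonneg _) hz2 2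
    linarith
  have qpos : ∀ z ∈ uIcc θ θ', 0 < qfun z φ u v := fun z hz => lt_of_lt_of_le (by positivity) (key z hz)
  set g : ℝ → ℝ := fun z => sin (z/2) * s' * (cos (z/2) * c') * (cosh (t/2) - 1 + qfun z φ u v)^(-N) with hg
  set G : ℝ → ℝ := fun z => u * cos (z/2) * s' - v * sin (z/2) * c' with hG
  set g' : ℝ → ℝ := fun z => (cos (z/2) / 2 * s' * (cos (z/2) * c') + sin (z/2) * s' * (-sin (z/2) / 2 * c'))
      * (cosh (t/2) - 1 + qfun z φ u v)^(-N)
      + sin (z/2) * s' * (cos (z/2) * c') * (-(G z / 2) * (-N) * (cosh (t/2) - 1 + qfun z φ u v)^(-N-1)) with hg'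
  have hder : ∀ z ∈ uIcc θ θ', HasDerivAt g (g' z) z := by
    intro z hz
    have hqz := qpos z hz
    have d0 : HasDerivAt (fun z : ℝ => z/2) (1/2) z := (hasDerivAt_id z).div_const 2
    have d1 : HasDerivAt (fun z : ℝ => sin (z/2)) (cos (z/2) / 2) z := by
      have := d0.sin; convert this using 1; ring
    have d2 : HasDerivAt (fun z : ℝ => cos (z/2)) (-sin (z/2) / 2) z := by
      have := d0.cos; convert this using 1; ring
    have d3 : HasDerivAt (fun z : ℝ => cosh (t/2) - 1 + qfun z φ u v) (-(G z / 2)) z := by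
      have := (((((d1.const_mul u).mul_const s').const_sub 1).sub ((d2.const_mul v).mul_const c'))).const_add (cosh (t/2) - 1)
      have e : -(G z / 2) = -(u * (cos (z / 2) / 2) * s') - v * (-sin (z / 2) / 2) * c' := by
        simp only [hG]; ring
      rw [e]; exact this
    have d4 := d3.rpow_const (p := -N) (Or.inl (by linarith))
    exact ((d1.mul_const s').mul (d2.mul_const c')).mul d4
  have hbd : ∀ z ∈ uIcc θ θ', ‖g' z‖ ≤ 2 * 7^N * (4 * N + 4) * q^(-N) *
        (A * B + √q * (s' * B + c' * A) + s' * c' * q) / sinh (t/2) := by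
    intro z hz
    obtain ⟨hz1, hz2⟩ := seg z hz
    have hqz := qpos z hz
    have hkz := key z hz
    rw [le_div_iff₀ hsinh, Real.norm_eq_abs]
    have hsz0 : 0 ≤ sin (z/2) := sin_nonneg_of_nonneg_of_le_pi (by linarith [hz1.1]) (by linarith [hz1.2, hz1.1])
    have hcz0 : 0 ≤ cos (z/2) := cos_nonneg_of_neg_pi_div_two_le_of_le (by linarith [hz1.1, hz1.2]) (by linarith [hz1.2])
    have hsz1 := sin_le_one (z/2)
    have hcz1 := cos_le_one (z/2)
    have dz : |z/2 - θ/2| ≤ 2 * √q := by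
      have : |z/2 - θ/2| = |θ - z| / 2 := by
        rw [← sub_div, abs_div, abs_sub_comm]; norm_num
      rw [this]; linarith
    have hAz : sin (z/2) * s' ≤ A + 2 * s' * √q := by
      have h1 := abs_sin_sub_sin_le (z/2) (θ/2)
      have h2 := le_abs_self (sin (z/2) - sin (θ/2))
      have h3 : sin (z/2) ≤ sin (θ/2) + 2 * √q := by linarith
      have := mul_le_mul_of_nonneg_right h3 hsp0
      rw [hA]; linarith
    have hBz : cos (z/2) * c' ≤ B + 2 * c' * √q := by
      have h1 := abs_cos_sub_cos_le (z/2) (θ/2)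
      have h2 := le_abs_self (cos (z/2) - cos (θ/2))
      have h3 : cos (z/2) ≤ cos (θ/2) + 2 * √q := by linarith
      have := mul_le_mul_of_nonneg_right h3 hcp0
      rw [hB]; linarith
    set qz := qfun z φ u v with hqzd
    have hGz : |G z / 2| ≤ √qz := by
      apply Real.abs_le_sqrt
      have := G_sq z φ u v hu hv
      simp only [hG]
      nlinarith
    have hq2 : qz ≤ 2 := qfun_le z φ u v hu hv
    have k1 := tkill t qz N ht hqz hq2 hN
    have k2 := tkill t qz (N+1) ht hqz hq2 (by linarith)
    set A2 := sin (z/2) * s' with hA2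
    set B2 := cos (z/2) * c' with hB2
    have hA20 : 0 ≤ A2 := by positivity
    have hB20 : 0 ≤ B2 := by positivity
    have m1 : qz^(-N) ≤ 7^N * q^(-N) := by
      have h1 : qz^(-N) ≤ (q/7)^(-N) := Real.rpow_le_rpow_of_nonpos (by positivity) hkz (by linarith)
      rw [Real.div_rpow hq0.le (by norm_num), Real.rpow_neg (by norm_num : (0:ℝ) ≤ 7), div_inv_eq_mul] at h1
      linarith
    have m2 : qz^(1/2-N) ≤ 7^N * (√q * q^(-N)) := by
      have h1 : qz^(1/2-N) ≤ (q/7)^(1/2-N) := Real.rpow_le_rpow_of_nonpos (by positivity) hkz (by linarith)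
      have h2 : (q/7)^(1/2-N) = 7^(N-1/2) * (√q * q^(-N)) := by
        rw [Real.div_rpow hq0.le (by norm_num), Real.sqrt_eq_rpow, ← Real.rpow_add hq0, div_eq_mul_inv,
          ← Real.rpow_neg (by norm_num : (0:ℝ) ≤ 7), mul_comm]
        congr 2 <;> ring
      have h3 : (7:ℝ)^(N-1/2) ≤ 7^N := Real.rpow_le_rpow_of_exponent_le (by norm_num) (by linarith)
      rw [h2] at h1
      refine h1.trans ?_
      gcongr
    have m3 : √qz * qz^(1/2-(N+1)) = qz^(-N) := by
      rw [Real.sqrt_eq_rpow, ← Real.rpow_add hqz]; congr 1; ring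
    have hPz : 0 < cosh (t/2) - 1 + qz := by linarith
    have p1 : 0 ≤ (cosh (t/2) - 1 + qz)^(-N) := Real.rpow_nonneg hPz.le _
    have p2 : 0 ≤ (cosh (t/2) - 1 + qz)^(-(N+1)) := Real.rpow_nonneg hPz.le _
    have e0 : g' z = (cos (z/2) / 2 * s' * B2 - A2 * (sin (z/2) / 2 * c')) * (cosh (t/2) - 1 + qz)^(-N)
        + A2 * B2 * N * (G z / 2) * (cosh (t/2) - 1 + qz)^(-(N+1)) := by
      simp only [hg', neg_add', ← hqzd]; ring
    have e1 : |cos (z/2) / 2 * s' * B2 - A2 * (sin (z/2) / 2 * c')| ≤ s' * B2 + c' * A2 := by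
      have a1 : 0 ≤ cos (z/2) / 2 * s' * B2 := by positivity
      have a2 : 0 ≤ A2 * (sin (z/2) / 2 * c') := by positivity
      have a3 : cos (z/2) / 2 * s' * B2 ≤ 1 * s' * B2 := by gcongr; linarith
      have a4 : A2 * (sin (z/2) / 2 * c') ≤ A2 * (1 * c') := by gcongr; linarith
      rw [abs_le]; constructor <;> linarith
    have e2 : |g' z| ≤ (s' * B2 + c' * A2) * (cosh (t/2) - 1 + qz)^(-N)
        + A2 * B2 * N * √qz * (cosh (t/2) - 1 + qz)^(-(N+1)) := by
      rw [e0]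
      refine (abs_add_le _ _).trans ?_
      rw [abs_mul, abs_mul _ ((cosh (t/2) - 1 + qz)^(-(N+1))), abs_of_nonneg p1, abs_of_nonneg p2,
        abs_mul, abs_of_nonneg (by positivity : 0 ≤ A2 * B2 * N)]
      gcongr
    have hn : 0 ≤ q^(-N) := Real.rpow_nonneg hq0.le _
    calc |g' z| * sinh (t/2) ≤ ((s' * B2 + c' * A2) * (cosh (t/2) - 1 + qz)^(-N)
        + A2 * B2 * N * √qz * (cosh (t/2) - 1 + qz)^(-(N+1))) * sinh (t/2) := by gcongr
      _ = (s' * B2 + c' * A2) * (sinh (t/2) * (cosh (t/2) - 1 + qz)^(-N))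
        + A2 * B2 * N * √qz * (sinh (t/2) * (cosh (t/2) - 1 + qz)^(-(N+1))) := by ring
      _ ≤ (s' * B2 + c' * A2) * (2 * qz^(1/2-N)) + A2 * B2 * N * √qz * (2 * qz^(1/2-(N+1))) := by
        gcongr
      _ = (s' * B2 + c' * A2) * (2 * qz^(1/2-N)) + A2 * B2 * N * (2 * qz^(-N)) := by
        rw [← m3]; ring
      _ ≤ (s' * B2 + c' * A2) * (2 * (7^N * (√q * q^(-N)))) + A2 * B2 * N * (2 * (7^N * q^(-N))) := by
        gcongr
      _ = 2 * 7^N * q^(-N) * (√q * (s' * B2 + c' * A2) + N * (A2 * B2)) := by ring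
      _ ≤ 2 * 7^N * q^(-N) * (√q * (s' * (B + 2 * c' * √q) + c' * (A + 2 * s' * √q))
            + N * ((A + 2 * s' * √q) * (B + 2 * c' * √q))) := by gcongr
      _ = 2 * 7^N * q^(-N) * (N * (A * B) + (1 + 2 * N) * (√q * (s' * B + c' * A))
            + (4 + 4 * N) * (s' * c' * √q^2)) := by ring
      _ = 2 * 7^N * q^(-N) * (N * (A * B) + (1 + 2 * N) * (√q * (s' * B + c' * A))
            + (4 + 4 * N) * (s' * c' * q)) := by rw [Real.sq_sqrt hq0.le]
      _ ≤ 2 * 7^N * q^(-N) * ((4 + 4 * N) * (A * B) + (4 + 4 * N) * (√q * (s' * B + c' * A))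
            + (4 + 4 * N) * (s' * c' * q)) := by gcongr <;> linarith
      _ = _ := by ring
  have mv := Convex.norm_image_sub_le_of_norm_hasDerivWithin_le
    (fun z hz => (hder z hz).hasDerivWithinAt) hbd (convex_uIcc θ θ') right_mem_uIcc left_mem_uIcc
  rw [Real.norm_eq_abs, Real.norm_eq_abs] at mv
  calc _ = sinh (t/2) * |g θ - g θ'| := rfl
    _ ≤ sinh (t/2) * _ := mul_le_mul_of_nonneg_left mv hsinh.le
    _ = _ := by field_simp

lemma sq_bound (s s' r : ℝ) (hs : 0 ≤ s) (hs' : 0 ≤ s') (h : |s' - s| ≤ r / 2) :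
    s'^2 ≤ 5 * (s * s' + r^2/20) := by
  have h1 := (abs_le.1 h).2
  nlinarith [sq_nonneg (s' - r/2), mul_le_mul_of_nonneg_left h1 hs', mul_nonneg hs hs']

lemma half_nonneg {z : ℝ} (hz : z ∈ Ioo (0:ℝ) π) : 0 < sin (z/2) ∧ 0 < cos (z/2) :=
  ⟨sin_pos_of_pos_of_lt_pi (by linarith [hz.1]) (by linarith [hz.2, hz.1]),
   cos_pos_of_mem_Ioo ⟨by linarith [hz.1, hz.2], by linarith [hz.2]⟩⟩

lemma half_diff (f : ℝ → ℝ) (hf : ∀ x y, |f x - f y| ≤ |x - y|) (x y : ℝ) :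
    |f (x/2) - f (y/2)| ≤ |x - y| / 2 := by
  refine (hf _ _).trans (le_of_eq ?_)
  rw [← sub_div, abs_div]; norm_num

lemma wt_bound (a x u A ρ q : ℝ) (ha : 0 ≤ a) (hx : x = 1 - u) (hu : u ∈ Ioo (-1:ℝ) 1)
    (hA : 0 ≤ A) (hρ : 0 ≤ ρ) (hq : ρ + x * A ≤ q) :
    (1 - u^2)^a * (A + ρ)^a ≤ 4^a * q^a := by
  subst hx
  have h0 : 0 ≤ 1 - u^2 := by nlinarith [hu.1, hu.2]
  have hx0 : 0 < 1 - u := by linarith [hu.2]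
  have hq0 : 0 ≤ q := by nlinarith
  rw [← Real.mul_rpow h0 (by positivity), ← Real.mul_rpow (by norm_num) hq0]
  apply Real.rpow_le_rpow (by positivity) _ ha
  have h1 : 1 - u^2 ≤ 2 * (1 - u) := by nlinarith [hu.1, hu.2]
  calc (1 - u^2) * (A + ρ) ≤ 2 * (1 - u) * (A + ρ) := by gcongr
    _ ≤ 4 * q := by nlinarith [hu.1, hu.2, mul_nonneg hρ (by linarith [hu.1] : 0 ≤ 1 + u)]

lemma rt_bound (x A ρ q s : ℝ) (hx : 0 < x) (hx2 : x ≤ 2) (hA : 0 ≤ A) (hρ : 0 ≤ ρ)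
    (hq : ρ + x * A ≤ q) (hs : s^2 ≤ 5 * (A + ρ)) (hq0 : 0 < q) :
    s ≤ 4 * √q * x^(-(1/2):ℝ) := by
  rw [Real.rpow_neg hx.le, ← Real.sqrt_eq_rpow, ← div_eq_mul_inv, le_div_iff₀ (Real.sqrt_pos.2 hx)]
  apply le_of_sq_le_sq _ (by positivity)
  rw [mul_pow, mul_pow, Real.sq_sqrt hx.le, Real.sq_sqrt hq0.le]
  nlinarith [mul_le_mul_of_nonneg_left hs hx.le, mul_le_mul_of_nonneg_right hx2 hρ, mul_nonneg hx.le hA]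

lemma pt2 (a b θ φ u v : ℝ) (ha : 0 ≤ a) (hb : 0 ≤ b) (hθ : θ ∈ Ioo (0:ℝ) π)
    (hφ : φ ∈ Ioo (0:ℝ) π) (hne : 0 < |θ - φ|) (hu : u ∈ Ioo (-1:ℝ) 1) (hv : v ∈ Ioo (-1:ℝ) 1)
    (A B ρ q : ℝ) (hA : A = sin (θ/2) * sin (φ/2)) (hB : B = cos (θ/2) * cos (φ/2))
    (hρ : ρ = |θ - φ|^2/20) (hq : q = qfun θ φ u v) :
    (1 - u^2)^a * (1 - v^2)^b * ((A + ρ)^a * (B + ρ)^b) * (q^(-(a+b+3)) *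
      (A * B + √q * (sin (φ/2) * B + cos (φ/2) * A) + sin (φ/2) * cos (φ/2) * q))
    ≤ 16 * 4^(a+b) * (A * B / (ρ + (1-u) * A + (1-v) * B)^3
        + B * (1-u)^(-(1/2):ℝ) / (ρ + (1-u) * A + (1-v) * B)^2
        + A * (1-v)^(-(1/2):ℝ) / (ρ + (1-u) * A + (1-v) * B)^2
        + (1-u)^(-(1/2):ℝ) * (1-v)^(-(1/2):ℝ) / (ρ + (1-u) * A + (1-v) * B)) := by
  obtain ⟨hs0, hc0⟩ := half_nonneg hθ
  obtain ⟨hsp0, hcp0⟩ := half_nonneg hφ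
  have hA0 : 0 ≤ A := by rw [hA]; positivity
  have hB0 : 0 ≤ B := by rw [hB]; positivity
  have hρ0 : 0 < ρ := by rw [hρ]; positivity
  have hx : 0 < 1 - u := by linarith [hu.2]
  have hy : 0 < 1 - v := by linarith [hv.2]
  have hQq : ρ + (1-u) * A + (1-v) * B ≤ q := by
    have := qfun_low θ φ u v hθ hφ
    rw [hρ, sq_abs, hA, hB, hq]; exact this
  have hspA : sin (φ/2)^2 ≤ 5 * (A + ρ) := by
    rw [hA, hρ]
    apply sq_bound _ _ _ hs0.le hsp0.le
    rw [abs_sub_comm θ]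
    exact half_diff _ abs_sin_sub_sin_le _ _
  have hcpB : cos (φ/2)^2 ≤ 5 * (B + ρ) := by
    rw [hB, hρ]
    apply sq_bound _ _ _ hc0.le hcp0.le
    rw [abs_sub_comm θ]
    exact half_diff _ abs_cos_sub_cos_le _ _
  have hxA : 0 ≤ (1-u) * A := by positivity
  have hyB : 0 ≤ (1-v) * B := by positivity
  set Q := ρ + (1-u) * A + (1-v) * B with hQ
  have hQ0 : 0 < Q := by positivity
  have hq0 : 0 < q := by linarith
  have w1 := wt_bound a (1-u) u A ρ q ha rfl hu hA0 hρ0.le (by linarith)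
  have w2 := wt_bound b (1-v) v B ρ q hb rfl hv hB0 hρ0.le (by linarith)
  have r1 := rt_bound (1-u) A ρ q _ hx (by linarith [hu.1]) hA0 hρ0.le (by linarith) hspA hq0
  have r2 := rt_bound (1-v) B ρ q _ hy (by linarith [hv.1]) hB0 hρ0.le (by linarith) hcpB hq0
  have hX0 : 0 ≤ (1-u)^(-(1/2):ℝ) := Real.rpow_nonneg hx.le _
  have hY0 : 0 ≤ (1-v)^(-(1/2):ℝ) := Real.rpow_nonneg hy.le _
  have u0 : 0 ≤ 1 - u^2 := by nlinarith [hu.1, hu.2]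
  have v0 : 0 ≤ 1 - v^2 := by nlinarith [hv.1, hv.2]
  generalize (1-u)^(-(1/2):ℝ) = X at *
  generalize (1-v)^(-(1/2):ℝ) = Y at *
  generalize sin (φ/2) = s' at *
  generalize cos (φ/2) = c' at *
  have W : (1 - u^2)^a * (1 - v^2)^b * ((A + ρ)^a * (B + ρ)^b) ≤ 4^(a+b) * q^(a+b) := by
    calc _ = ((1 - u^2)^a * (A + ρ)^a) * ((1 - v^2)^b * (B + ρ)^b) := by ring
      _ ≤ (4^a * q^a) * (4^b * q^b) := by gcongr
      _ = _ := by rw [Real.rpow_add (by norm_num), Real.rpow_add hq0]; ring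
  have hqq : q^(a+b) * q^(-(a+b+3)) = (q^3)⁻¹ := by
    rw [← Real.rpow_add hq0, ← Real.rpow_natCast, ← Real.rpow_neg hq0.le]; congr 1; push_cast; ring
  have hsq := Real.sq_sqrt hq0.le
  have hsq0 := Real.sqrt_nonneg q
  have E1 : A * B + √q * (s' * B + c' * A) + s' * c' * q
      ≤ 16 * (A * B + q * X * B + q * Y * A + q^2 * X * Y) := by
    calc _ ≤ A * B + √q * ((4 * √q * X) * B + (4 * √q * Y) * A) + (4 * √q * X) * (4 * √q * Y) * q := by
          gcongr
      _ = A * B + 4 * √q^2 * (X * B + Y * A) + 16 * √q^2 * q * X * Y := by ring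
      _ = A * B + 4 * (q * X * B + q * Y * A) + 16 * (q^2 * X * Y) := by rw [hsq]; ring
      _ ≤ _ := by
          have h1 : 0 ≤ A * B := by positivity
          have h2 : 0 ≤ q * X * B := by positivity
          have h3 : 0 ≤ q * Y * A := by positivity
          linarith
  have hE0 : 0 ≤ A * B + √q * (s' * B + c' * A) + s' * c' * q := by positivity
  have hqn : 0 ≤ q^(-(a+b+3)) := Real.rpow_nonneg hq0.le _
  calc _ ≤ 4^(a+b) * q^(a+b) * (q^(-(a+b+3)) * (16 * (A * B + q * X * B + q * Y * A + q^2 * X * Y))) := by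
        gcongr
    _ = 16 * 4^(a+b) * (q^(a+b) * q^(-(a+b+3))) * (A * B + q * X * B + q * Y * A + q^2 * X * Y) := by ring
    _ = 16 * 4^(a+b) * (A * B / q^3 + B * X / q^2 + A * Y / q^2 + X * Y / q) := by
        rw [hqq]; field_simp
    _ ≤ _ := by gcongr

lemma pi_integral (α : ℝ) (hα : -(1/2) ≤ α) (g : ℝ → ℝ) :
    ∫ v, g v ∂(PiMeasure (α + 1)) =
      Real.Gamma (α + 1 + 1) / (Real.sqrt π * Real.Gamma (α + 1 + 1 / 2)) *
        ∫ v in (-1:ℝ)..1, (1 - v^2)^(α + 1/2) * g v := by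
  have hne : α + 1 ≠ -(1/2) := by intro h; linarith
  have hk : 0 ≤ Real.Gamma (α + 1 + 1) / (Real.sqrt π * Real.Gamma (α + 1 + 1 / 2)) := by
    have h1 : 0 < Real.Gamma (α + 1 + 1) := Real.Gamma_pos_of_pos (by linarith)
    have h2 : 0 < Real.Gamma (α + 1 + 1/2) := Real.Gamma_pos_of_pos (by linarith)
    positivity
  unfold PiMeasure
  rw [if_neg hne, integral_withDensity_eq_integral_toReal_smul (by fun_prop) (by simp),
    intervalIntegral.integral_of_le (by norm_num), ← integral_Icc_eq_integral_Ioc,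
    ← integral_const_mul]
  apply setIntegral_congr_fun measurableSet_Icc
  intro v hv
  have h0 : 0 ≤ 1 - v^2 := by nlinarith [hv.1, hv.2]
  simp only [smul_eq_mul]
  rw [ENNReal.toReal_ofReal (mul_nonneg hk (Real.rpow_nonneg h0 _))]
  have : α + 1 - 1/2 = α + 1/2 := by ring
  rw [this]; ring

/-- The clamped integrand. -/
noncomputable def hfun (a b t z φ u v : ℝ) : ℝ :=
  (1 - u^2)^a * ((1 - v^2)^b * (sin (z/2) * sin (φ/2) * (cos (z/2) * cos (φ/2)) *
    (max (cosh (t/2) - 1 + qfun z φ u v) (cosh (t/2) - 1))^(-(a+b+3))))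

lemma hfun_cont (a b t z φ : ℝ) (ha : 0 ≤ a) (hb : 0 ≤ b) (ht : 0 < t) :
    Continuous (Function.uncurry (hfun a b t z φ)) := by
  have hX : 0 < cosh (t/2) - 1 := by
    have := Real.one_lt_cosh.2 (show t/2 ≠ 0 by positivity); linarith
  unfold hfun Function.uncurry qfun
  refine Continuous.mul ?_ (Continuous.mul ?_ (Continuous.mul (by fun_prop) ?_))
  · exact Continuous.rpow_const (by fun_prop) (fun _ => Or.inr ha)
  · exact Continuous.rpow_const (by fun_prop) (fun _ => Or.inr hb)
  · refine Continuous.rpow_const (by fun_prop) (fun x => Or.inl ?_)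
    exact (lt_of_lt_of_le hX (le_max_right _ _)).ne'

lemma hfun_eq (a b t z φ u v : ℝ) (hu : |u| ≤ 1) (hv : |v| ≤ 1) :
    hfun a b t z φ u v = (1 - u^2)^a * ((1 - v^2)^b * (sin (z/2) * sin (φ/2) * (cos (z/2) * cos (φ/2)) *
    (cosh (t/2) - 1 + qfun z φ u v)^(-(a+b+3)))) := by
  unfold hfun
  rw [max_eq_left]
  linarith [qfun_nonneg z φ u v hu hv]

/-- The constant in front of the kernel. -/
noncomputable def Kc (α β : ℝ) : ℝ :=
  ((2 : ℝ) ^ (-(α + 1 + (β + 1) + 2)) / (jacobiMeasure (α+1) (β+1) (Ioo 0 π)).toReal) *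
  (Real.Gamma (α + 1 + 1) / (Real.sqrt π * Real.Gamma (α + 1 + 1 / 2))) *
  (Real.Gamma (β + 1 + 1) / (Real.sqrt π * Real.Gamma (β + 1 + 1 / 2)))

lemma Htilde_eq (α β t z φ : ℝ) (hα : -(1/2) ≤ α) (hβ : -(1/2) ≤ β) (ht : 0 < t) :
    Htilde α β t z φ = Kc α β * (sinh (t/2) *
      ∫ u in (-1:ℝ)..1, ∫ v in (-1:ℝ)..1, hfun (α+1/2) (β+1/2) t z φ u v) := by
  have hsin : 1/4 * sin z * sin φ = sin (z/2) * sin (φ/2) * (cos (z/2) * cos (φ/2)) := by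
    have h1 : sin z = 2 * sin (z/2) * cos (z/2) := by rw [← sin_two_mul]; congr 1; ring
    have h2 : sin φ = 2 * sin (φ/2) * cos (φ/2) := by rw [← sin_two_mul]; congr 1; ring
    rw [h1, h2]; ring
  have hI : ∫ u in (-1:ℝ)..1, ∫ v in (-1:ℝ)..1, hfun (α+1/2) (β+1/2) t z φ u v =
      sin (z/2) * sin (φ/2) * (cos (z/2) * cos (φ/2)) *
      ∫ u in (-1:ℝ)..1, (1 - u^2)^(α+1/2) * ∫ v in (-1:ℝ)..1, (1 - v^2)^(β+1/2) *
        (1 / (cosh (t/2) - 1 + qfun z φ u v)^(α + 1 + (β + 1) + 2)) := by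
    rw [← intervalIntegral.integral_const_mul]
    apply intervalIntegral.integral_congr
    intro u hu
    rw [uIcc_of_le (by norm_num)] at hu
    simp only
    rw [← intervalIntegral.integral_const_mul, ← intervalIntegral.integral_const_mul]
    apply intervalIntegral.integral_congr
    intro v hv
    rw [uIcc_of_le (by norm_num)] at hv
    have hu' : |u| ≤ 1 := abs_le.2 ⟨hu.1, hu.2⟩
    have hv' : |v| ≤ 1 := abs_le.2 ⟨hv.1, hv.2⟩
    simp only
    rw [hfun_eq _ _ _ _ _ _ _ hu' hv', Real.rpow_neg (by
      linarith [qfun_nonneg z φ u v hu' hv', Real.one_le_cosh (t/2)])]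
    have : α + 1/2 + (β + 1/2) + 3 = α + 1 + (β + 1) + 2 := by ring
    rw [this, one_div]; ring
  rw [hI]
  unfold Htilde Hker Kc
  rw [hsin]
  simp only [pi_integral β hβ]
  rw [integral_const_mul, pi_integral α hα]
  ring

lemma dbl_sub (c : ℝ) (f g : ℝ → ℝ → ℝ) (hf : Continuous (Function.uncurry f))
    (hg : Continuous (Function.uncurry g)) :
    c * (∫ u in (-1:ℝ)..1, ∫ v in (-1:ℝ)..1, f u v) - c * (∫ u in (-1:ℝ)..1, ∫ v in (-1:ℝ)..1, g u v)
     = ∫ u in (-1:ℝ)..1, ∫ v in (-1:ℝ)..1, c * (f u v - g u v) := by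
  have cf := intervalIntegral.continuous_parametric_intervalIntegral_of_continuous' (μ := volume) hf (-1) 1
  have cg := intervalIntegral.continuous_parametric_intervalIntegral_of_continuous' (μ := volume) hg (-1) 1
  rw [← mul_sub, ← intervalIntegral.integral_sub (cf.intervalIntegrable _ _) (cg.intervalIntegrable _ _),
    ← intervalIntegral.integral_const_mul]
  apply intervalIntegral.integral_congr
  intro u _
  simp only
  have h1 : Continuous (f u) := hf.comp (Continuous.prodMk_right u)
  have h2 : Continuous (g u) := hg.comp (Continuous.prodMk_right u)
  rw [intervalIntegral.integral_const_mul, intervalIntegral.integral_sub (h1.intervalIntegrable _ _) (h2.intervalIntegrable _ _)]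

lemma meas_bound (α β θ φ : ℝ) (hα : -(1/2) ≤ α) (hβ : -(1/2) ≤ β) (hθ : θ ∈ Ioo (0:ℝ) π)
    (hφ : φ ∈ Ioo (0:ℝ) π) (hne : 0 < |θ - φ|) (A B ρ : ℝ)
    (hA : A = sin (θ/2) * sin (φ/2)) (hB : B = cos (θ/2) * cos (φ/2))
    (hρ : ρ = |θ - φ|^2/20) :
    0 < (jacobiMeasure α β (jacobiBall θ |θ - φ|)).toReal ∧
    (jacobiMeasure α β (jacobiBall θ |θ - φ|)).toReal ≤
      2 * |θ - φ| * 20^(α+1/2+(β+1/2)) * ((A + ρ)^(α+1/2) * (B + ρ)^(β+1/2)) := by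
  set r := |θ - φ| with hr
  obtain ⟨hs0, hc0⟩ := half_nonneg hθ
  obtain ⟨hsp0, hcp0⟩ := half_nonneg hφ
  have hA0 : 0 < A := by rw [hA]; positivity
  have hB0 : 0 < B := by rw [hB]; positivity
  have hρ0 : 0 < ρ := by rw [hρ]; positivity
  have hsA : sin (θ/2)^2 ≤ 5 * (A + ρ) := by
    rw [hA, hρ, mul_comm (sin (θ/2))]
    exact sq_bound _ _ _ hsp0.le hs0.le (half_diff _ abs_sin_sub_sin_le _ _)
  have hcB : cos (θ/2)^2 ≤ 5 * (B + ρ) := by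
    rw [hB, hρ, mul_comm (cos (θ/2))]
    exact sq_bound _ _ _ hcp0.le hc0.le (half_diff _ abs_cos_sub_cos_le _ _)
  set K := (20 * (A + ρ))^(α+1/2) * (20 * (B + ρ))^(β+1/2) with hK
  have hK0 : 0 ≤ K := by positivity
  have hmeas : Measurable (fun z : ℝ => ENNReal.ofReal (Real.sin (z / 2) ^ (2 * α + 1) * Real.cos (z / 2) ^ (2 * β + 1))) := by
    fun_prop
  have hms : MeasurableSet (jacobiBall θ r) := measurableSet_Ioo.inter measurableSet_Ioo
  have hsub : jacobiBall θ r ⊆ Ioo 0 π := inter_subset_right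
  have hap : jacobiMeasure α β (jacobiBall θ r) = ∫⁻ z in jacobiBall θ r,
      ENNReal.ofReal (Real.sin (z / 2) ^ (2 * α + 1) * Real.cos (z / 2) ^ (2 * β + 1)) := by
    unfold jacobiMeasure
    rw [withDensity_apply _ hms, Measure.restrict_restrict hms, inter_eq_left.2 hsub]
  have aux : ∀ (w x0 D e : ℝ), 0 < w → w ≤ x0 + r/2 → 0 ≤ x0 → x0^2 ≤ 5 * (D + ρ) → 0 ≤ D → -(1/2) ≤ e →
      w^(2*e+1) ≤ (20 * (D + ρ))^(e+1/2) := by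
    intro w x0 D e hw hw2 hx0 hx hD he
    have : w^(2*e+1) = (w^2)^(e+1/2) := by
      rw [← Real.rpow_natCast, ← Real.rpow_mul hw.le]; congr 1; push_cast; ring
    rw [this]
    apply Real.rpow_le_rpow (by positivity) _ (by linarith)
    have h1 : w^2 ≤ (x0 + r/2)^2 := pow_le_pow_left₀ hw.le hw2 2
    have h2 : r^2 = 20 * ρ := by rw [hρ]; ring
    nlinarith [sq_nonneg (x0 - r/2)]
  have hle : jacobiMeasure α β (jacobiBall θ r) ≤ ENNReal.ofReal (2 * r * K) := by
    rw [hap]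
    calc _ ≤ ∫⁻ z in jacobiBall θ r, ENNReal.ofReal K := by
          apply setLIntegral_mono' hms
          intro z hz
          obtain ⟨h1, h2⟩ := half_nonneg hz.2
          have hd : |z - θ| ≤ r := by
            rw [abs_le]; constructor <;> linarith [hz.1.1, hz.1.2]
          have d1 := (le_abs_self _).trans (half_diff _ abs_sin_sub_sin_le z θ)
          have d2 := (le_abs_self _).trans (half_diff _ abs_cos_sub_cos_le z θ)
          apply ENNReal.ofReal_le_ofReal
          have b1 := aux _ _ A α h1 (by linarith) hs0.le hsA hA0.le hα
          have b2 := aux _ _ B β h2 (by linarith) hc0.le hcB hB0.le hβ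
          rw [hK]
          gcongr
      _ = ENNReal.ofReal K * volume (jacobiBall θ r) := by rw [setLIntegral_const]
      _ ≤ ENNReal.ofReal K * volume (Ioo (θ - r) (θ + r)) := by
          gcongr; exact inter_subset_left
      _ = ENNReal.ofReal (2 * r * K) := by
          rw [Real.volume_Ioo, ← ENNReal.ofReal_mul hK0]; congr 1; ring
  have hKe : 2 * r * K = 2 * r * 20^(α+1/2+(β+1/2)) * ((A + ρ)^(α+1/2) * (B + ρ)^(β+1/2)) := by
    rw [hK, Real.mul_rpow (by norm_num) (by positivity), Real.mul_rpow (by norm_num) (by positivity),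
      Real.rpow_add (by norm_num : (0:ℝ) < 20) (α+1/2) (β+1/2)]; ring
  constructor
  · apply ENNReal.toReal_pos _ (lt_of_le_of_lt hle ENNReal.ofReal_lt_top).ne
    rw [hap]
    apply ne_of_gt
    rw [setLIntegral_pos_iff hmeas]
    have hop : IsOpen (jacobiBall θ r) := isOpen_Ioo.inter isOpen_Ioo
    have hpos : 0 < volume (jacobiBall θ r) :=
      hop.measure_pos volume ⟨θ, ⟨by linarith, by linarith⟩, hθ⟩
    refine hpos.trans_le (measure_mono ?_)
    intro z hz
    refine ⟨?_, hz⟩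
    obtain ⟨h1, h2⟩ := half_nonneg hz.2
    rw [Function.mem_support]
    apply ne_of_gt
    rw [ENNReal.ofReal_pos]
    positivity
  · rw [← hKe]
    exact ENNReal.toReal_le_of_le_ofReal (by positivity) hle

set_option maxHeartbeats 1600000 in
/-- smoothness estimate for the symmetrized kernel `H̃_t^{α,β}`. -/
theorem Htilde_smoothness (α β : ℝ) (hα : -(1 / 2) ≤ α) (hβ : -(1 / 2) ≤ β) :
    ∃ C : ℝ, 0 < C ∧
      ∀ θ ∈ Ioo (0 : ℝ) π, ∀ θ' ∈ Ioo (0 : ℝ) π, ∀ φ ∈ Ioo (0 : ℝ) π,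
        |θ - φ| > 2 * |θ - θ'| →
        ∀ t : ℝ, 0 < t →
          |Htilde α β t θ φ - Htilde α β t θ' φ|
            ≤ C * (|θ - θ'| / |θ - φ|) *
                (1 / (jacobiMeasure α β (jacobiBall θ |θ - φ|)).toReal) := by

  set a := α + 1/2 with ha'
  set b := β + 1/2 with hb'
  have ha : 0 ≤ a := by rw [ha']; linarith
  have hb : 0 ≤ b := by rw [hb']; linarith
  set N := a + b + 3 with hN
  have hN1 : 1 ≤ N := by rw [hN]; linarith
  set K1 : ℝ := 2 * 7^N * (4 * N + 4) * (16 * 4^(a+b)) with hK1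
  have hK10 : 0 ≤ K1 := by positivity
  refine ⟨640 * |Kc α β| * K1 * 20^(a+b) + 1, by positivity, ?_⟩
  intro θ hθ θ' hθ' φ hφ hr t ht
  have hr0 : 0 < |θ - φ| := by linarith [abs_nonneg (θ - θ')]
  obtain ⟨A, hA⟩ : ∃ A, A = sin (θ/2) * sin (φ/2) := ⟨_, rfl⟩
  obtain ⟨B, hB⟩ : ∃ B, B = cos (θ/2) * cos (φ/2) := ⟨_, rfl⟩
  obtain ⟨ρ, hρ⟩ : ∃ ρ, ρ = |θ - φ|^2/20 := ⟨_, rfl⟩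
  obtain ⟨hs0, hc0⟩ := half_nonneg hθ
  obtain ⟨hsp0, hcp0⟩ := half_nonneg hφ
  have hA0 : 0 < A := by rw [hA]; positivity
  have hB0 : 0 < B := by rw [hB]; positivity
  have hρ0 : 0 < ρ := by rw [hρ]; positivity
  obtain ⟨m0, m1⟩ := meas_bound α β θ φ hα hβ hθ hφ hr0 A B ρ hA hB hρ
  rw [← ha', ← hb'] at m1
  set m := (A + ρ)^a * (B + ρ)^b with hm
  have hm0 : 0 < m := by positivity
  have hsinh : 0 < sinh (t/2) := Real.sinh_pos_iff.2 (by linarith)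
  have main := dbl_bound A B ρ (K1 * |θ - θ'| / m) hA0.le hB0.le hρ0 (by positivity)
    (fun u v => sinh (t/2) * (hfun a b t θ φ u v - hfun a b t θ' φ u v)) (by
      intro u hu v hv
      have hu' : |u| ≤ 1 := abs_le.2 ⟨hu.1.le, hu.2.le⟩
      have hv' : |v| ≤ 1 := abs_le.2 ⟨hv.1.le, hv.2.le⟩
      have p1 := pt1 N t θ θ' φ u v hN1 ht hθ hθ' hφ hr hu' hv'
      have p2 := pt2 a b θ φ u v ha hb hθ hφ hr0 hu hv A B ρ _ hA hB hρ rfl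
      rw [← hm, ← hN] at p2
      rw [← hA, ← hB] at p1
      rw [hfun_eq _ _ _ _ _ _ _ hu' hv', hfun_eq _ _ _ _ _ _ _ hu' hv', ← hN, ← hA, ← hB]
      have u0 : 0 ≤ (1 - u^2)^a := Real.rpow_nonneg (by nlinarith [hu.1, hu.2]) _
      have v0 : 0 ≤ (1 - v^2)^b := Real.rpow_nonneg (by nlinarith [hv.1, hv.2]) _
      rw [← mul_sub, ← mul_sub, abs_mul, abs_mul, abs_mul, abs_of_nonneg u0, abs_of_nonneg v0,
        abs_of_pos hsinh]
      rw [div_mul_eq_mul_div, le_div_iff₀ hm0]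
      have p3 := mul_le_mul_of_nonneg_left p1 (by positivity : 0 ≤ (1 - u^2)^a * (1 - v^2)^b * m)
      have p4 := mul_le_mul_of_nonneg_left p2 (by positivity : 0 ≤ 2 * 7^N * (4 * N + 4) * |θ - θ'|)
      refine le_trans (le_of_eq ?_) (p3.trans (le_trans (le_of_eq ?_) (p4.trans (le_of_eq ?_))))
      · ring
      · ring
      · rw [hK1]; ring)
  rw [← dbl_sub _ _ _ (hfun_cont a b t θ φ ha hb ht) (hfun_cont a b t θ' φ ha hb ht)] at main
  rw [Htilde_eq α β t θ φ hα hβ ht, Htilde_eq α β t θ' φ hα hβ ht, ← mul_sub, abs_mul, ← ha', ← hb']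
  have hinv : 1 / (2 * |θ - φ| * 20^(a+b) * m) ≤ 1 / (jacobiMeasure α β (jacobiBall θ |θ - φ|)).toReal :=
    one_div_le_one_div_of_le m0 m1
  calc _ ≤ |Kc α β| * (16 * (K1 * |θ - θ'| / m) / ρ) := by gcongr
    _ = 640 * |Kc α β| * K1 * 20^(a+b) * (|θ - θ'| / |θ - φ|) * (1 / (2 * |θ - φ| * 20^(a+b) * m)) := by
        have : (20:ℝ)^(a+b) ≠ 0 := by positivity
        rw [hρ]; field_simp; ring
    _ ≤ (640 * |Kc α β| * K1 * 20^(a+b) + 1) * (|θ - θ'| / |θ - φ|) * (1 / (2 * |θ - φ| * 20^(a+b) * m)) := by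
        gcongr; linarith
    _ ≤ _ := by gcongr
end
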